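/- arXiv:1703.00677 — 3 statements merged into one kernel-verified Lean document; each statement's English description precedes it below -/
import Mathlib

section
/- Let (S,d) be a complete separable metric space and let (φ_t)_{t ≥ 0} be a semigroup of Borel measurable transformations of S (φ_0 = id, φ_t ∘ φ_s = φ_{t+s}). For each t ≥ 0 let P_t : M⁺(S) → M⁺(S) be the push-forward operator, P_t μ(E) = μ(φ_t^{-1}(E)) for Borel sets E ⊆ S. Then the family (P_t)_{t ≥ 0}, viewed as maps from M⁺(S) with the metric induced by ‖·‖*_BL to itself, is equicontinuous if and only if the family (φ_t)_{t ≥ 0} of maps S → S is equicontinuous. -/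
open MeasureTheory Filter Topology

/-- A function is bounded Lipschitz. -/
def IsBL {S : Type*} [PseudoMetricSpace S] (f : S → ℝ) : Prop :=
  (∃ C : ℝ, ∀ x, |f x| ≤ C) ∧ ∃ K : NNReal, LipschitzWith K f

/-- Pairing of a finite signed Borel measure with a function, via the Jordan decomposition. -/
noncomputable def pairing {S : Type*} [MeasurableSpace S] (μ : SignedMeasure S) (f : S → ℝ) : ℝ :=
  (∫ x, f x ∂μ.toJordanDecomposition.posPart) - ∫ x, f x ∂μ.toJordanDecomposition.negPart

/-- Dual bounded Lipschitz norm on signed measures. -/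
noncomputable def blDualNorm {S : Type*} [PseudoMetricSpace S] [MeasurableSpace S]
    (μ : SignedMeasure S) : ℝ :=
  sSup {r : ℝ | ∃ (f : S → ℝ) (C : ℝ) (K : NNReal), (∀ x, |f x| ≤ C) ∧
    LipschitzWith K f ∧ C + (K : ℝ) ≤ 1 ∧ r = |pairing μ f|}
/-- The metric induced by `‖·‖*_BL` on finite positive Borel measures. -/
noncomputable def blDist {S : Type*} [PseudoMetricSpace S] [MeasurableSpace S]
    (μ ν : FiniteMeasure S) : ℝ :=
  blDualNorm ((μ : Measure S).toSignedMeasure - (ν : Measure S).toSignedMeasure)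

/-!
If `P_t` is equicontinuous, testing on Dirac masses gives the claim, because `P_t δ_x = δ_{φ_t x}`
and the dual bounded Lipschitz distance of `δ_x` and `δ_y` is comparable to `min 1 (dist x y)`.

Conversely, `∫ f d(P_t μ) = ∫ f ∘ φ_t dμ`, and the functions `f ∘ φ_t`, with `f` in the unit ball
of `BL(S)`, form a uniformly bounded equicontinuous family. It therefore suffices that the
integrals of such a family are equicontinuous in the measure. Up to a set of small `μ₀`-measure,
its members `g` have a common modulus of continuity at a fixed scale `r`, so each `g` is
`μ₀`-close to its largest `K`-Lipschitz minorant `g_K`, for one `K` of order `1 / r`. On the other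
hand `∫ g_K dμ ≤ ∫ g dμ` for every `μ`, so `∫ g dμ₀ - ∫ g dμ` is bounded, up to a small error,
by `∫ g_K dμ₀ - ∫ g_K dμ`, which the distance of `μ` and `μ₀` controls. Replacing `g` by `-g`
gives the other inequality.
-/

open scoped NNReal

section Integration

variable {X : Type*} [MeasurableSpace X] {f : X → ℝ} {C : ℝ}

lemma integrable_of_abs_le (μ : Measure X) [IsFiniteMeasure μ] (hf : Measurable f)
    (hC : ∀ x, |f x| ≤ C) : Integrable f μ :=
  .of_bound hf.aestronglyMeasurable C (.of_forall hC)

lemma pairing_toSignedMeasure_sub (μ ν : Measure X) [IsFiniteMeasure μ] [IsFiniteMeasure ν]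
    (hf : Measurable f) (hC : ∀ x, |f x| ≤ C) :
    pairing (μ.toSignedMeasure - ν.toSignedMeasure) f = ∫ x, f x ∂μ - ∫ x, f x ∂ν := by
  set s := μ.toSignedMeasure - ν.toSignedMeasure with hs
  set p := s.toJordanDecomposition.posPart with hp
  set n := s.toJordanDecomposition.negPart with hn
  have jordan : p.toSignedMeasure - n.toSignedMeasure = s :=
    s.toSignedMeasure_toJordanDecomposition
  have measure_eq : p + ν = μ + n := by
    rw [← Measure.toSignedMeasure_eq_toSignedMeasure_iff, Measure.toSignedMeasure_add,
      Measure.toSignedMeasure_add, ← sub_eq_sub_iff_add_eq_add, jordan, hs]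
  have integral_eq : ∫ x, f x ∂p + ∫ x, f x ∂ν = ∫ x, f x ∂μ + ∫ x, f x ∂n := by
    have hint (m : Measure X) [IsFiniteMeasure m] := integrable_of_abs_le m hf hC
    rw [← integral_add_measure (hint p) (hint ν), measure_eq,
      integral_add_measure (hint μ) (hint n)]
  rw [pairing, ← hp, ← hn]
  linarith

lemma integral_le_mul_measureReal_add_compl {μ : Measure X} [IsFiniteMeasure μ] {A : Set X}
    {a b : ℝ} (hA : MeasurableSet A) (hf : Integrable f μ) (ha : ∀ x ∈ A, f x ≤ a)
    (hb : ∀ x, f x ≤ b) : ∫ x, f x ∂μ ≤ a * μ.real A + b * μ.real Aᶜ :=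
  calc ∫ x, f x ∂μ = ∫ x in A, f x ∂μ + ∫ x in Aᶜ, f x ∂μ := (integral_add_compl hA hf).symm
    _ ≤ ∫ _ in A, a ∂μ + ∫ _ in Aᶜ, b ∂μ :=
      add_le_add
        (setIntegral_mono_on hf.integrableOn (integrable_const a) hA ha)
        (setIntegral_mono hf.integrableOn (integrable_const b) hb)
    _ = a * μ.real A + b * μ.real Aᶜ := by
      simp only [setIntegral_const, smul_eq_mul, mul_comm]

end Integration

section BLDist

variable {X : Type*} [PseudoMetricSpace X] [MeasurableSpace X] [OpensMeasurableSpace X]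
  (μ ν : FiniteMeasure X) {f : X → ℝ}

lemma bddAbove_abs_pairing_toSignedMeasure_sub :
    BddAbove {r : ℝ | ∃ (f : X → ℝ) (C : ℝ) (K : ℝ≥0), (∀ x, |f x| ≤ C) ∧ LipschitzWith K f ∧
      C + (K : ℝ) ≤ 1 ∧
      r = |pairing ((μ : Measure X).toSignedMeasure - (ν : Measure X).toSignedMeasure) f|} := by
  refine ⟨(μ : Measure X).real Set.univ + (ν : Measure X).real Set.univ, ?_⟩
  rintro _ ⟨f, C, K, hC, hf, hCK, rfl⟩
  have abs_integral_le (m : Measure X) [IsFiniteMeasure m] :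
      |∫ x, f x ∂m| ≤ m.real Set.univ := by
    simpa using norm_integral_le_of_norm_le_const (μ := m) (f := f) (C := 1)
      (.of_forall fun x ↦ (hC x).trans (by linarith [K.coe_nonneg]))
  rw [pairing_toSignedMeasure_sub _ _ hf.continuous.measurable hC]
  exact (abs_sub _ _).trans (add_le_add (abs_integral_le μ) (abs_integral_le ν))

lemma abs_integral_sub_le_blDist {C : ℝ} {K : ℝ≥0} (hC : ∀ x, |f x| ≤ C)
    (hf : LipschitzWith K f) (hCK : C + K ≤ 1) :
    |∫ x, f x ∂(μ : Measure X) - ∫ x, f x ∂(ν : Measure X)| ≤ blDist μ ν :=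
  le_csSup (bddAbove_abs_pairing_toSignedMeasure_sub μ ν)
    ⟨f, C, K, hC, hf, hCK, by rw [pairing_toSignedMeasure_sub _ _ hf.continuous.measurable hC]⟩

lemma abs_integral_sub_le_mul_blDist {M K : ℝ≥0} (hM : ∀ x, |f x| ≤ M)
    (hf : LipschitzWith K f) :
    |∫ x, f x ∂(μ : Measure X) - ∫ x, f x ∂(ν : Measure X)| ≤ (M + K) * blDist μ ν := by
  obtain hMK | hMK := eq_zero_or_pos (M + K)
  · have hf0 : f = 0 := funext fun x ↦ by simpa [(add_eq_zero.1 hMK).1] using hM x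
    rw [← NNReal.coe_add, hMK, hf0]
    simp
  · have hMK' : (0 : ℝ) < M + K := mod_cast hMK
    have hbound (x : X) : |(M + K : ℝ)⁻¹ * f x| ≤ (M + K : ℝ)⁻¹ * M := by
      rw [abs_mul, abs_of_pos (inv_pos.2 hMK')]
      gcongr
      exact hM x
    have hlip : LipschitzWith ((M + K)⁻¹ * K) fun x ↦ (M + K : ℝ)⁻¹ * f x := by
      have hnorm : ‖(M + K : ℝ)⁻¹‖₊ = (M + K)⁻¹ := by ext; simp [abs_of_pos hMK']
      exact hnorm ▸ (lipschitzWith_smul (M + K : ℝ)⁻¹).comp hf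
    have hunit : (M + K : ℝ)⁻¹ * M + ((M + K)⁻¹ * K : ℝ≥0) ≤ 1 := by
      push_cast
      rw [← mul_add, inv_mul_cancel₀ hMK'.ne']
    have hscaled := abs_integral_sub_le_blDist μ ν hbound hlip hunit
    rwa [integral_const_mul, integral_const_mul, ← mul_sub, abs_mul,
      abs_of_pos (inv_pos.2 hMK'), inv_mul_le_iff₀ hMK'] at hscaled

lemma blDist_le {B : ℝ} (h : ∀ f : X → ℝ, (∀ x, |f x| ≤ 1) → LipschitzWith 1 f →
      |∫ x, f x ∂(μ : Measure X) - ∫ x, f x ∂(ν : Measure X)| ≤ B) : blDist μ ν ≤ B := by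
  refine csSup_le ⟨_, 0, 0, 0, by simp, .const 0, by simp, rfl⟩ ?_
  rintro _ ⟨f, C, K, hC, hf, hCK, rfl⟩
  have hf_one : ∀ x, |f x| ≤ 1 := fun x ↦ (hC x).trans (by linarith [K.coe_nonneg])
  have hf_lip : LipschitzWith 1 f := .of_dist_le_mul fun x y ↦ by
    have hK : (K : ℝ) ≤ (1 : ℝ≥0) := by
      push_cast
      linarith [(abs_nonneg (f x)).trans (hC x)]
    exact (hf.dist_le_mul x y).trans (by gcongr)
  rw [pairing_toSignedMeasure_sub _ _ hf.continuous.measurable hC]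
  exact h f hf_one hf_lip

end BLDist

section Dirac

variable {Y Z : Type*} [MeasurableSpace Y] [MeasurableSpace Z]

lemma map_diracProba_toFiniteMeasure {φ : Y → Z} (hφ : Measurable φ) (y : Y) :
    (diracProba y).toFiniteMeasure.map φ = (diracProba (φ y)).toFiniteMeasure :=
  Subtype.ext (Measure.map_dirac' hφ y)

lemma integral_diracProba_toFiniteMeasure {f : Y → ℝ} (hf : Measurable f) (y : Y) :
    ∫ z, f z ∂((diracProba y).toFiniteMeasure : Measure Y) = f y :=
  integral_dirac' f y hf.stronglyMeasurable

variable {X : Type*} [PseudoMetricSpace X] [MeasurableSpace X] [OpensMeasurableSpace X]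

lemma blDist_diracProba_le_dist (x y : X) :
    blDist (diracProba x).toFiniteMeasure (diracProba y).toFiniteMeasure ≤ dist x y := by
  refine blDist_le _ _ fun f _ hf ↦ ?_
  rw [integral_diracProba_toFiniteMeasure hf.continuous.measurable,
    integral_diracProba_toFiniteMeasure hf.continuous.measurable]
  simpa [Real.dist_eq] using hf.dist_le_mul x y

lemma min_one_dist_le_two_mul_blDist_diracProba (x y : X) :
    min 1 (dist x y) ≤
      2 * blDist (diracProba x).toFiniteMeasure (diracProba y).toFiniteMeasure := by
  let f : X → ℝ := fun z ↦ min 1 (dist z y)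
  have hf_nonneg (z : X) : 0 ≤ f z := le_min zero_le_one dist_nonneg
  have hf_bound (z : X) : |f z| ≤ (1 : ℝ≥0) := by
    rw [abs_of_nonneg (hf_nonneg z)]
    exact min_le_left _ _
  have hf_lip : LipschitzWith 1 f := (LipschitzWith.dist_left y).const_min 1
  have hf_meas : Measurable f := hf_lip.continuous.measurable
  have hfy : f y = 0 := by simp [f]
  have htest := abs_integral_sub_le_mul_blDist (diracProba x).toFiniteMeasure
    (diracProba y).toFiniteMeasure hf_bound hf_lip
  rw [integral_diracProba_toFiniteMeasure hf_meas, integral_diracProba_toFiniteMeasure hf_meas,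
    hfy, sub_zero, abs_of_nonneg (hf_nonneg x), NNReal.coe_one, one_add_one_eq_two] at htest
  exact htest

end Dirac

/-- The Pasch–Hausdorff envelope of `g`: for `g` bounded below, its largest `K`-Lipschitz minorant.
It replaces a continuous test function by a Lipschitz one. -/
noncomputable def lipschitzEnvelope {X : Type*} [PseudoMetricSpace X] (K : ℝ≥0) (g : X → ℝ)
    (y : X) : ℝ :=
  ⨅ x, (g x + K * dist x y)

section LipschitzEnvelope

variable {X : Type*} [PseudoMetricSpace X] {K : ℝ≥0} {g : X → ℝ}

lemma lipschitzEnvelope_le_add_mul_dist (hg : BddBelow (Set.range g)) (x y : X) :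
    lipschitzEnvelope K g y ≤ g x + K * dist x y := by
  obtain ⟨m, hm⟩ := hg
  refine ciInf_le ⟨m, ?_⟩ x
  rintro _ ⟨z, rfl⟩
  exact (hm ⟨z, rfl⟩).trans (le_add_of_nonneg_right (by positivity))

lemma lipschitzEnvelope_le (hg : BddBelow (Set.range g)) (y : X) :
    lipschitzEnvelope K g y ≤ g y := by
  simpa using lipschitzEnvelope_le_add_mul_dist hg y y

lemma le_lipschitzEnvelope_of_forall_dist_lt {c r : ℝ} {y : X}
    (hnear : ∀ x, dist x y < r → c ≤ g x) (hfar : ∀ x, c ≤ g x + K * r) :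
    c ≤ lipschitzEnvelope K g y := by
  have : Nonempty X := ⟨y⟩
  refine le_ciInf fun x ↦ ?_
  obtain hx | hx := lt_or_ge (dist x y) r
  · exact (hnear x hx).trans (le_add_of_nonneg_right (by positivity))
  · exact (hfar x).trans (by gcongr)

lemma lipschitzWith_lipschitzEnvelope (hg : BddBelow (Set.range g)) :
    LipschitzWith K (lipschitzEnvelope K g) := by
  refine .of_le_add_mul _ fun x y ↦ ?_
  have : Nonempty X := ⟨y⟩
  rw [← sub_le_iff_le_add]
  refine le_ciInf fun z ↦ ?_
  have htriangle : (K : ℝ) * dist z x ≤ K * (dist z y + dist x y) := by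
    gcongr
    exact dist_triangle_right _ _ _
  linarith [lipschitzEnvelope_le_add_mul_dist (K := K) hg z x]

lemma abs_lipschitzEnvelope_le {M : ℝ} (hM : ∀ x, |g x| ≤ M) (y : X) :
    |lipschitzEnvelope K g y| ≤ M := by
  have hg : BddBelow (Set.range g) := ⟨-M, by rintro _ ⟨x, rfl⟩; exact neg_le_of_abs_le (hM x)⟩
  have hlower : -M ≤ lipschitzEnvelope K g y :=
    le_lipschitzEnvelope_of_forall_dist_lt (r := 0) (fun x _ ↦ neg_le_of_abs_le (hM x))
      fun x ↦ by simpa using neg_le_of_abs_le (hM x)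
  exact abs_le.2 ⟨hlower, (lipschitzEnvelope_le hg y).trans (le_of_abs_le (hM y))⟩

end LipschitzEnvelope

/-- The points on whose open `r`-ball every member of the family `F` stays within `η` of its value
at the center. For an equicontinuous family and fixed `η > 0` these closed sets exhaust the space as
`r` decreases to `0`. -/
def equicontinuitySet {ι X Y : Type*} [PseudoMetricSpace X] [PseudoMetricSpace Y] (F : ι → X → Y)
    (η r : ℝ) : Set X :=
  {x | ∀ i y, dist y x < r → dist (F i y) (F i x) ≤ η}

section EquicontinuitySet

variable {ι X Y : Type*} [PseudoMetricSpace X] [PseudoMetricSpace Y] {F : ι → X → Y} {η r : ℝ}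

lemma isClosed_equicontinuitySet (hF : ∀ i, Continuous (F i)) :
    IsClosed (equicontinuitySet F η r) := by
  simp only [equicontinuitySet, Set.ofPred_forall]
  exact isClosed_iInter fun i ↦ isClosed_iInter fun y ↦
    isClosed_imp (isOpen_lt (by fun_prop) continuous_const)
      (isClosed_le (continuous_const.dist (hF i)) continuous_const)

lemma antitone_equicontinuitySet (F : ι → X → Y) (η : ℝ) : Antitone (equicontinuitySet F η) :=
  fun _ _ hrs _ hx i y hy ↦ hx i y (hy.trans_le hrs)

lemma iUnion_equicontinuitySet (hF : Equicontinuous F) (hη : 0 < η) :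
    ⋃ n : ℕ, equicontinuitySet F η (1 / (n + 1)) = Set.univ := by
  refine Set.eq_univ_of_forall fun x ↦ ?_
  obtain ⟨r, hr, hball⟩ := Metric.equicontinuousAt_iff.1 (hF x) η hη
  obtain ⟨n, hn⟩ := exists_nat_one_div_lt hr
  refine Set.mem_iUnion.2 ⟨n, fun i y hy ↦ ?_⟩
  rw [dist_comm]
  exact (hball y (hy.trans hn) i).le

lemma exists_measureReal_compl_equicontinuitySet_lt [MeasurableSpace X] [OpensMeasurableSpace X]
    (μ : Measure X) [IsFiniteMeasure μ] (hF : Equicontinuous F) (hη : 0 < η) {ε : ℝ}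
    (hε : 0 < ε) : ∃ r, 0 < r ∧ μ.real (equicontinuitySet F η r)ᶜ < ε := by
  let A : ℕ → Set X := fun n ↦ equicontinuitySet F η (1 / (n + 1))
  have hA_meas (n : ℕ) : MeasurableSet (A n) :=
    (isClosed_equicontinuitySet hF.continuous).measurableSet
  have hA_mono : Monotone A := fun m n hmn ↦
    antitone_equicontinuitySet F η (Nat.one_div_le_one_div hmn)
  have hA_compl : ⋂ n, (A n)ᶜ = ∅ := by
    rw [← Set.compl_iUnion, iUnion_equicontinuitySet hF hη, Set.compl_univ]
  have hlim : Tendsto (fun n ↦ μ (A n)ᶜ) atTop (𝓝 0) := by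
    rw [← measure_empty (μ := μ), ← hA_compl]
    exact tendsto_measure_iInter_atTop (fun n ↦ (hA_meas n).compl.nullMeasurableSet)
      (fun m n hmn ↦ Set.compl_subset_compl.2 (hA_mono hmn)) ⟨0, measure_ne_top _ _⟩
  have hlim_real : Tendsto (fun n ↦ μ.real (A n)ᶜ) atTop (𝓝 0) :=
    (ENNReal.tendsto_toReal ENNReal.zero_ne_top).comp hlim
  obtain ⟨n, hn⟩ := (hlim_real.eventually_lt_const hε).exists
  exact ⟨1 / (n + 1), Nat.one_div_pos_of_nat, hn⟩

end EquicontinuitySet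

section IntegralEquicontinuity

variable {ι X : Type*} [PseudoMetricSpace X] [MeasurableSpace X] [OpensMeasurableSpace X]

lemma integral_sub_integral_le_of_oscillation (μ₀ μ : FiniteMeasure X) {g : X → ℝ}
    (hg : Continuous g) {M K : ℝ≥0} (hM : ∀ x, |g x| ≤ M) {A : Set X} (hA : MeasurableSet A)
    {η r : ℝ} (hη : 0 ≤ η) (hosc : ∀ y ∈ A, ∀ x, dist x y < r → g y - η ≤ g x)
    (hK : 2 * M ≤ K * r) :
    ∫ x, g x ∂(μ₀ : Measure X) - ∫ x, g x ∂(μ : Measure X) ≤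
      η * (μ₀ : Measure X).real A + 2 * M * (μ₀ : Measure X).real Aᶜ +
        (M + K) * blDist μ μ₀ := by
  set e := lipschitzEnvelope K g
  have hg_lower (x : X) : -M ≤ g x := neg_le_of_abs_le (hM x)
  have hg_upper (x : X) : g x ≤ M := le_of_abs_le (hM x)
  have hg_bdd : BddBelow (Set.range g) := ⟨-M, by rintro _ ⟨x, rfl⟩; exact hg_lower x⟩
  have he_lip : LipschitzWith K e := lipschitzWith_lipschitzEnvelope hg_bdd
  have he_bound : ∀ x, |e x| ≤ M := abs_lipschitzEnvelope_le hM
  have hg_int (m : Measure X) [IsFiniteMeasure m] := integrable_of_abs_le m hg.measurable hM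
  have he_int (m : Measure X) [IsFiniteMeasure m] :=
    integrable_of_abs_le m he_lip.continuous.measurable he_bound
  have hgood : ∀ y ∈ A, g y - e y ≤ η := fun y hy ↦ by
    have := le_lipschitzEnvelope_of_forall_dist_lt (K := K) (hosc y hy)
      fun x ↦ by linarith [hg_lower x, hg_upper y]
    linarith
  have hbad (y : X) : g y - e y ≤ 2 * M := by
    linarith [hg_upper y, neg_le_of_abs_le (he_bound y)]
  have happrox : ∫ x, g x ∂(μ₀ : Measure X) - ∫ x, e x ∂(μ₀ : Measure X) ≤
      η * (μ₀ : Measure X).real A + 2 * M * (μ₀ : Measure X).real Aᶜ := by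
    rw [← integral_sub (hg_int _) (he_int _)]
    exact integral_le_mul_measureReal_add_compl hA ((hg_int _).sub (he_int _)) hgood hbad
  have hminorant : ∫ x, e x ∂(μ : Measure X) ≤ ∫ x, g x ∂(μ : Measure X) :=
    integral_mono (he_int _) (hg_int _) (lipschitzEnvelope_le hg_bdd)
  have hdist := neg_le_of_abs_le (abs_integral_sub_le_mul_blDist μ μ₀ he_bound he_lip)
  linarith

lemma exists_integral_sub_lt_of_equicontinuous {F : ι → X → ℝ} (hF : Equicontinuous F) {M : ℝ≥0}
    (hM : ∀ i x, |F i x| ≤ M) (μ₀ : FiniteMeasure X) {ε : ℝ} (hε : 0 < ε) :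
    ∃ δ, 0 < δ ∧ ∀ i (μ : FiniteMeasure X), blDist μ μ₀ < δ →
      ∫ x, F i x ∂(μ₀ : Measure X) - ∫ x, F i x ∂(μ : Measure X) < ε := by
  have hε3 : 0 < ε / 3 := by positivity
  obtain ⟨η, hη, hη_mul⟩ := exists_pos_mul_lt hε3 ((μ₀ : Measure X).real Set.univ)
  obtain ⟨κ, hκ, hκ_mul⟩ := exists_pos_mul_lt hε3 (2 * M)
  obtain ⟨r, hr, hr_compl⟩ := exists_measureReal_compl_equicontinuitySet_lt μ₀ hF hη hκ
  set A := equicontinuitySet F η r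
  set K : ℝ≥0 := (2 * M / r).toNNReal with hK
  have hKr : 2 * M ≤ K * r := by
    rw [hK, Real.coe_toNNReal _ (by positivity), div_mul_cancel₀ _ hr.ne']
  obtain ⟨δ, hδ, hδ_mul⟩ := exists_pos_mul_lt hε3 (M + K : ℝ)
  refine ⟨δ, hδ, fun i μ hμ ↦ ?_⟩
  have hosc : ∀ y ∈ A, ∀ x, dist x y < r → F i y - η ≤ F i x := fun y hy x hx ↦ by
    linarith [neg_le_of_abs_le (hy i x hx)]
  calc ∫ x, F i x ∂(μ₀ : Measure X) - ∫ x, F i x ∂(μ : Measure X)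
      ≤ η * (μ₀ : Measure X).real A + 2 * M * (μ₀ : Measure X).real Aᶜ +
          (M + K) * blDist μ μ₀ :=
        integral_sub_integral_le_of_oscillation μ₀ μ (hF.continuous i) (hM i)
          (isClosed_equicontinuitySet hF.continuous).measurableSet hη.le hosc hKr
    _ ≤ η * (μ₀ : Measure X).real Set.univ + 2 * M * κ + (M + K) * δ := by
        gcongr
        · exact measure_ne_top _ _
        · exact Set.subset_univ A
    _ < ε := by linarith

lemma exists_abs_integral_sub_lt_of_equicontinuous {F : ι → X → ℝ} (hF : Equicontinuous F)
    {M : ℝ≥0} (hM : ∀ i x, |F i x| ≤ M) (μ₀ : FiniteMeasure X) {ε : ℝ} (hε : 0 < ε) :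
    ∃ δ, 0 < δ ∧ ∀ i (μ : FiniteMeasure X), blDist μ μ₀ < δ →
      |∫ x, F i x ∂(μ : Measure X) - ∫ x, F i x ∂(μ₀ : Measure X)| < ε := by
  have hF_neg : Equicontinuous (-F) := fun x₀ ↦ by
    simpa only [Metric.equicontinuousAt_iff, Pi.neg_apply, dist_neg_neg] using hF x₀
  have hM_neg (i : ι) (x : X) : |(-F) i x| ≤ M := by simpa using hM i x
  obtain ⟨δ₁, hδ₁, h₁⟩ := exists_integral_sub_lt_of_equicontinuous hF hM μ₀ hε
  obtain ⟨δ₂, hδ₂, h₂⟩ := exists_integral_sub_lt_of_equicontinuous hF_neg hM_neg μ₀ hε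
  refine ⟨min δ₁ δ₂, lt_min hδ₁ hδ₂, fun i μ hμ ↦ abs_lt.2 ⟨?_, ?_⟩⟩
  · linarith [h₁ i μ (hμ.trans_le (min_le_left _ _))]
  · have := h₂ i μ (hμ.trans_le (min_le_right _ _))
    simp only [Pi.neg_apply, integral_neg] at this
    linarith

end IntegralEquicontinuity

lemma equicontinuous_comp_of_uniformEquicontinuous {ι κ X Y Z : Type*} [TopologicalSpace X]
    [UniformSpace Y] [UniformSpace Z] {f : κ → Y → Z} {φ : ι → X → Y}
    (hf : UniformEquicontinuous f) (hφ : Equicontinuous φ) :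
    Equicontinuous fun p : κ × ι ↦ f p.1 ∘ φ p.2 := fun x₀ U hU ↦ by
  filter_upwards [hφ x₀ _ (hf U hU)] with x hx p
  exact hx p.2 p.1

section Pushforward

variable {ι X Y : Type*} [PseudoMetricSpace X] [MeasurableSpace X] [OpensMeasurableSpace X]
  [PseudoMetricSpace Y] [MeasurableSpace Y] [OpensMeasurableSpace Y] {φ : ι → X → Y}

lemma equicontinuous_of_blDist_map_lt (hmeas : ∀ i, Measurable (φ i))
    (h : ∀ μ₀ : FiniteMeasure X, ∀ ε : ℝ, 0 < ε → ∃ δ : ℝ, 0 < δ ∧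
      ∀ (i : ι) (μ : FiniteMeasure X),
        blDist μ μ₀ < δ → blDist (μ.map (φ i)) (μ₀.map (φ i)) < ε) :
    Equicontinuous φ := by
  refine fun x₀ ↦ Metric.equicontinuousAt_iff.2 fun ε hε ↦ ?_
  obtain ⟨δ, hδ, hclose⟩ := h (diracProba x₀).toFiniteMeasure (min 1 ε / 2) (by positivity)
  refine ⟨δ, hδ, fun x hx i ↦ ?_⟩
  have hdirac := hclose i _ ((blDist_diracProba_le_dist x x₀).trans_lt hx)
  rw [map_diracProba_toFiniteMeasure (hmeas i), map_diracProba_toFiniteMeasure (hmeas i)]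
    at hdirac
  have hmin : min 1 (dist (φ i x) (φ i x₀)) < min 1 ε := by
    linarith [min_one_dist_le_two_mul_blDist_diracProba (φ i x) (φ i x₀)]
  rw [dist_comm]
  exact lt_of_not_ge fun hge ↦ hmin.not_ge (min_le_min_left 1 hge)

lemma exists_blDist_map_lt_of_equicontinuous (hmeas : ∀ i, Measurable (φ i))
    (hφ : Equicontinuous φ) (μ₀ : FiniteMeasure X) {ε : ℝ} (hε : 0 < ε) :
    ∃ δ : ℝ, 0 < δ ∧ ∀ (i : ι) (μ : FiniteMeasure X),
      blDist μ μ₀ < δ → blDist (μ.map (φ i)) (μ₀.map (φ i)) < ε := by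
  let TestFunctions : Type _ := {f : Y → ℝ // LipschitzWith 1 f ∧ ∀ y, |f y| ≤ (1 : ℝ≥0)}
  have htest : UniformEquicontinuous fun f : TestFunctions ↦ f.1 :=
    LipschitzWith.uniformEquicontinuous _ 1 fun f ↦ f.2.1
  obtain ⟨δ, hδ, hclose⟩ := exists_abs_integral_sub_lt_of_equicontinuous
    (equicontinuous_comp_of_uniformEquicontinuous htest hφ) (fun p x ↦ p.1.2.2 (φ p.2 x)) μ₀
    (half_pos hε)
  refine ⟨δ, hδ, fun i μ hμ ↦ lt_of_le_of_lt ?_ (half_lt_self hε)⟩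
  refine blDist_le _ _ fun f hf_bound hf_lip ↦ ?_
  have integral_map_eq (ν : FiniteMeasure X) :
      ∫ y, f y ∂(ν.map (φ i) : Measure Y) = ∫ x, f (φ i x) ∂(ν : Measure X) := by
    rw [FiniteMeasure.toMeasure_map]
    exact integral_map (hmeas i).aemeasurable hf_lip.continuous.measurable.aestronglyMeasurable
  rw [integral_map_eq, integral_map_eq]
  exact (hclose (⟨f, hf_lip, hf_bound⟩, i) μ hμ).le

theorem pushforward_semigroup_equicontinuous_iff_general (hmeas : ∀ i, Measurable (φ i)) :
    (∀ μ₀ : FiniteMeasure X, ∀ ε : ℝ, 0 < ε → ∃ δ : ℝ, 0 < δ ∧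
        ∀ (i : ι) (μ : FiniteMeasure X),
          blDist μ μ₀ < δ → blDist (μ.map (φ i)) (μ₀.map (φ i)) < ε) ↔
      Equicontinuous φ :=
  ⟨equicontinuous_of_blDist_map_lt hmeas,
    fun hφ μ₀ _ hε ↦ exists_blDist_map_lt_of_equicontinuous hmeas hφ μ₀ hε⟩

end Pushforward

/-- **Equicontinuity of the lifted semigroup.** Let `(φ_t)_{t ≥ 0}` be a semigroup of Borel
measurable transformations of a complete separable metric space `S`, and let `P_t` be the
push-forward operator on finite positive Borel measures, `P_t μ = μ ∘ φ_t⁻¹`. Then `(P_t)` is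
equicontinuous for the metric induced by `‖·‖*_BL` on `M⁺(S)` if and only if `(φ_t)` is
equicontinuous as a family of maps `S → S`. -/
theorem pushforward_semigroup_equicontinuous_iff {S : Type*} [MetricSpace S] [CompleteSpace S]
    [TopologicalSpace.SeparableSpace S] [MeasurableSpace S] [BorelSpace S]
    (φ : NNReal → S → S) (hmeas : ∀ t, Measurable (φ t))
    (h0 : φ 0 = id) (hsg : ∀ t s : NNReal, φ t ∘ φ s = φ (t + s)) :
    ((∀ μ₀ : FiniteMeasure S, ∀ ε : ℝ, 0 < ε → ∃ δ : ℝ, 0 < δ ∧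
        ∀ (t : NNReal) (μ : FiniteMeasure S),
          blDist μ μ₀ < δ → blDist (μ.map (φ t)) (μ₀.map (φ t)) < ε) ↔
      Equicontinuous φ) := by
  exact pushforward_semigroup_equicontinuous_iff_general hmeas
end

section
/- Let (S,d) be a complete separable metric space and let M ⊆ M(S) be a set of finite signed Borel measures with sup_{μ ∈ M} ‖μ‖_TV < ∞. If the restriction to M of the σ(M(S), BL(S))-weak topology is first countable, then this restricted topology coincides with the restriction to M of the topology induced by the norm ‖·‖*_BL. -/
open MeasureTheory Filter Topology

/-- Total variation norm of a finite signed measure. -/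
noncomputable def tvNorm {S : Type*} [MeasurableSpace S] (μ : SignedMeasure S) : ℝ :=
  (μ.totalVariation Set.univ).toReal

/-- The `σ(M(S), BL(S))`-weak topology on `M(S)`: the coarsest topology making
`μ ↦ ⟨μ, f⟩` continuous for every bounded Lipschitz `f`. -/
noncomputable def weakTop (S : Type*) [PseudoMetricSpace S] [MeasurableSpace S] :
    TopologicalSpace (SignedMeasure S) :=
  ⨅ f : {g : S → ℝ // IsBL g},
    TopologicalSpace.induced (fun μ : SignedMeasure S => pairing μ f.1) inferInstance

/-- The topology on `M(S)` induced by the norm `‖·‖*_BL`, generated by the open balls. -/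
noncomputable def normTop (S : Type*) [PseudoMetricSpace S] [MeasurableSpace S] :
    TopologicalSpace (SignedMeasure S) :=
  TopologicalSpace.generateFrom
    {B | ∃ (μ : SignedMeasure S) (ε : ℝ), 0 < ε ∧ B = {ν | blDualNorm (ν - μ) < ε}}

/-!
Everything rests on a Schur-type property: a sequence `κ n` that is bounded in total variation and
satisfies `⟨κ n, f⟩ → 0` for every bounded Lipschitz `f` satisfies `‖κ n‖*_BL → 0`. For a sequential
weak topology on `M` this makes every `ν ↦ ‖ν - μ‖*_BL` weakly continuous.

The `K`-Lipschitz functions into `[-1, 1]` form a pointwise compact space on which each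
`⟨κ n, ·⟩` is continuous, so Baire's theorem yields `f₀` and a finite set `F` such that `⟨κ n, f⟩`
is eventually small, uniformly over all `f` in the ball agreeing with `f₀` on `F`. If `K δ ≥ 2`, a
nonnegative `h` in the ball that vanishes within distance `δ` of `F` is a difference of two such
functions, so `⟨κ n, h⟩` is small as well. A `1`-Lipschitz `g ≤ δ` on `F` has positive part within
`2δ` of such an `h`, namely `(g - 2δ)⁺`, and the total variation bound controls the error. Hence
`⟨κ n, g⟩` is uniformly small over all `1`-Lipschitz `g` that are small on `F`: convergence is
locally uniform on the compact `1`-Lipschitz ball, thus uniform.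
-/

open scoped NNReal

section Pairing

variable {S : Type*} [MeasurableSpace S]

lemma pairing_eq_integral {μ : SignedMeasure S} {f : S → ℝ} (hf : μ.Integrable f) :
    pairing μ f = ∫ᵛ x, f x ∂<•μ := by
  rw [VectorMeasure.Integrable, ← μ.totalVariation_eq_variation, SignedMeasure.totalVariation,
    integrable_add_measure] at hf
  conv_rhs => rw [← μ.toSignedMeasure_toJordanDecomposition, JordanDecomposition.toSignedMeasure]
  rw [VectorMeasure.integral_sub_vectorMeasure, VectorMeasure.integral_toSignedMeasure,
    VectorMeasure.integral_toSignedMeasure, pairing]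
  · simpa only [VectorMeasure.Integrable, Measure.variation_toSignedMeasure] using hf.1
  · simpa only [VectorMeasure.Integrable, Measure.variation_toSignedMeasure] using hf.2

lemma pairing_sub_right {μ : SignedMeasure S} {f g : S → ℝ} (hf : μ.Integrable f)
    (hg : μ.Integrable g) : pairing μ (fun x => f x - g x) = pairing μ f - pairing μ g := by
  rw [pairing_eq_integral hf, pairing_eq_integral hg, ← VectorMeasure.integral_fun_sub hf hg]
  exact pairing_eq_integral (hf.sub hg)

lemma pairing_const_mul (μ : SignedMeasure S) (a : ℝ) (f : S → ℝ) :
    pairing μ (fun x => a * f x) = a * pairing μ f := by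
  simp only [pairing, integral_const_mul, mul_sub]

lemma pairing_zero_left (f : S → ℝ) : pairing (0 : SignedMeasure S) f = 0 := by
  simp [pairing, SignedMeasure.toJordanDecomposition_zero]

lemma pairing_neg_left (μ : SignedMeasure S) (f : S → ℝ) : pairing (-μ) f = -pairing μ f := by
  simp [pairing, SignedMeasure.toJordanDecomposition_neg]

lemma pairing_add_left {μ ν : SignedMeasure S} {f : S → ℝ} (hμ : μ.Integrable f)
    (hν : ν.Integrable f) : pairing (μ + ν) f = pairing μ f + pairing ν f := by
  rw [pairing_eq_integral hμ, pairing_eq_integral hν,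
    pairing_eq_integral (hμ.add_vectorMeasure hν)]
  exact VectorMeasure.integral_add_vectorMeasure hμ hν

lemma pairing_sub_left {μ ν : SignedMeasure S} {f : S → ℝ} (hμ : μ.Integrable f)
    (hν : ν.Integrable f) : pairing (μ - ν) f = pairing μ f - pairing ν f := by
  rw [sub_eq_add_neg, pairing_add_left hμ hν.neg_vectorMeasure, pairing_neg_left, sub_eq_add_neg]

lemma tvNorm_nonneg (μ : SignedMeasure S) : 0 ≤ tvNorm μ :=
  ENNReal.toReal_nonneg

lemma tvNorm_sub_le (μ ν : SignedMeasure S) : tvNorm (μ - ν) ≤ tvNorm μ + tvNorm ν := by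
  have hle : (μ - ν).totalVariation Set.univ ≤
      μ.totalVariation Set.univ + ν.totalVariation Set.univ := by
    simp only [SignedMeasure.totalVariation_eq_variation]
    exact VectorMeasure.variation_sub_le Set.univ
  rw [tvNorm, tvNorm, tvNorm, ← ENNReal.toReal_add (measure_ne_top _ _) (measure_ne_top _ _)]
  exact ENNReal.toReal_mono (by finiteness) hle

lemma abs_pairing_le (μ : SignedMeasure S) {f : S → ℝ} {c : ℝ} (hf : ∀ x, |f x| ≤ c) :
    |pairing μ f| ≤ c * tvNorm μ := by
  have abs_integral_le (P : Measure S) [IsFiniteMeasure P] :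
      |∫ x, f x ∂P| ≤ c * P.real Set.univ :=
    norm_integral_le_of_norm_le_const (f := f) (Eventually.of_forall hf)
  calc |pairing μ f|
      ≤ c * μ.toJordanDecomposition.posPart.real Set.univ
          + c * μ.toJordanDecomposition.negPart.real Set.univ :=
        (abs_sub _ _).trans (add_le_add (abs_integral_le _) (abs_integral_le _))
    _ = c * tvNorm μ := by
        rw [← mul_add, tvNorm, SignedMeasure.totalVariation, ← measureReal_def,
          measureReal_add_apply]

end Pairing

section BoundedLipschitz

variable {S : Type*} [PseudoMetricSpace S]

lemma IsBL.integrable [MeasurableSpace S] [OpensMeasurableSpace S] {f : S → ℝ} (hf : IsBL f)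
    (μ : SignedMeasure S) : μ.Integrable f := by
  obtain ⟨⟨C, hC⟩, K, hK⟩ := hf
  rw [VectorMeasure.Integrable, ← μ.totalVariation_eq_variation]
  exact Integrable.of_bound hK.continuous.measurable.aestronglyMeasurable C
    (Eventually.of_forall hC)

/-- The `K`-Lipschitz functions with values in `[-1, 1]`, as a subset of `S → ℝ` so that it carries
the topology of pointwise convergence. -/
def lipUnitBall (S : Type*) [PseudoMetricSpace S] (K : ℝ≥0) : Set (S → ℝ) :=
  {f | (∀ x, |f x| ≤ 1) ∧ LipschitzWith K f}

variable {K : ℝ≥0} {f g : S → ℝ}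

lemma mem_lipUnitBall_one {C : ℝ} (hC : ∀ x, |f x| ≤ C) (hK : LipschitzWith K f)
    (hCK : C + K ≤ 1) : f ∈ lipUnitBall S 1 := by
  refine ⟨fun x => by linarith [hC x, K.coe_nonneg], LipschitzWith.of_dist_le_mul fun x y => ?_⟩
  have hK_le : (K : ℝ) ≤ 1 := by linarith [(abs_nonneg _).trans (hC x)]
  exact (hK.dist_le_mul x y).trans (mul_le_mul_of_nonneg_right hK_le dist_nonneg)

lemma isBL_of_mem_lipUnitBall (hf : f ∈ lipUnitBall S K) : IsBL f :=
  ⟨⟨1, hf.1⟩, K, hf.2⟩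

lemma lipUnitBall_mono {K' : ℝ≥0} (hK : K ≤ K') : lipUnitBall S K ⊆ lipUnitBall S K' :=
  fun _ hf => ⟨hf.1, hf.2.weaken hK⟩

lemma neg_mem_lipUnitBall (hf : f ∈ lipUnitBall S K) : -f ∈ lipUnitBall S K :=
  ⟨fun x => by simpa using hf.1 x, hf.2.neg⟩

lemma half_sub_mem_lipUnitBall (hf : f ∈ lipUnitBall S K) (hg : g ∈ lipUnitBall S K) :
    (fun x => (1 / 2) * (f x - g x)) ∈ lipUnitBall S K := by
  refine ⟨fun x => ?_, LipschitzWith.of_dist_le_mul fun x y => ?_⟩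
  · have hfx := abs_le.1 (hf.1 x)
    have hgx := abs_le.1 (hg.1 x)
    rw [abs_le]
    constructor <;> linarith
  · have hfxy := abs_le.1 (hf.2.dist_le_mul x y)
    have hgxy := abs_le.1 (hg.2.dist_le_mul x y)
    rw [Real.dist_eq, abs_le]
    constructor <;> linarith

lemma max_sub_zero_mem_lipUnitBall (hf : f ∈ lipUnitBall S K) {c : ℝ} (hc : 0 ≤ c) :
    (fun x => max (f x - c) 0) ∈ lipUnitBall S K := by
  refine ⟨fun x => ?_, ?_⟩
  · rw [abs_of_nonneg (le_max_right _ _)]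
    exact max_le (by linarith [(abs_le.1 (hf.1 x)).2]) zero_le_one
  · simpa using (hf.2.sub (LipschitzWith.const c)).max_const 0

lemma max_zero_mem_lipUnitBall (hf : f ∈ lipUnitBall S K) :
    (fun x => max (f x) 0) ∈ lipUnitBall S K := by
  simpa only [sub_zero] using max_sub_zero_mem_lipUnitBall hf le_rfl

lemma isCompact_lipUnitBall (K : ℝ≥0) : IsCompact (lipUnitBall S K) := by
  have hcube : IsCompact (Set.univ.pi fun _ : S => Set.Icc (-1 : ℝ) 1) :=
    isCompact_univ_pi fun _ => isCompact_Icc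
  refine hcube.of_isClosed_subset ?_ fun f hf x _ => abs_le.1 (hf.1 x)
  have hbdd : IsClosed {f : S → ℝ | ∀ x, |f x| ≤ 1} := by
    simp only [Set.ofPred_forall]
    exact isClosed_iInter fun x => isClosed_le (by fun_prop) continuous_const
  exact hbdd.inter (isClosed_setOfPred_lipschitzWith K)

-- Evaluation on a countable dense set embeds the ball into a countable product of lines.
lemma firstCountableTopology_lipUnitBall [TopologicalSpace.SeparableSpace S] (K : ℝ≥0) :
    FirstCountableTopology (lipUnitBall S K) := by
  obtain ⟨D, hD_countable, hD_dense⟩ := TopologicalSpace.exists_countable_dense S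
  have : Countable D := hD_countable.to_subtype
  have : CompactSpace (lipUnitBall S K) := isCompact_iff_compactSpace.1 (isCompact_lipUnitBall K)
  let restr : lipUnitBall S K → D → ℝ := fun f d => f.1 d
  have hcont : Continuous restr :=
    continuous_pi fun d => (continuous_apply d.1).comp continuous_subtype_val
  have hinj : Function.Injective restr := fun f g hfg => Subtype.ext <|
    Continuous.ext_on hD_dense f.2.2.continuous g.2.2.continuous
      fun x hx => congrFun hfg ⟨x, hx⟩
  exact (hcont.isClosedEmbedding hinj).isInducing.firstCountableTopology

lemma continuous_pairing_lipUnitBall [TopologicalSpace.SeparableSpace S] [MeasurableSpace S]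
    [OpensMeasurableSpace S] (μ : SignedMeasure S) (K : ℝ≥0) :
    Continuous fun f : lipUnitBall S K => pairing μ f := by
  have := firstCountableTopology_lipUnitBall (S := S) K
  have continuous_integral (P : Measure S) [IsFiniteMeasure P] :
      Continuous fun f : lipUnitBall S K => ∫ x, f.1 x ∂P :=
    continuous_of_dominated (bound := fun _ => 1)
      (fun f => f.2.2.continuous.measurable.aestronglyMeasurable)
      (fun f => Eventually.of_forall f.2.1) (integrable_const _)
      (Eventually.of_forall fun x => (continuous_apply x).comp continuous_subtype_val)
  exact (continuous_integral _).sub (continuous_integral _)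

end BoundedLipschitz

section LipschitzPerturbation

variable {S : Type*} [PseudoMetricSpace S] {K : ℝ≥0} {δ : ℝ} {f₀ h : S → ℝ} {F : Set S}

lemma lipschitzOnWith_ite_neg_one (hK : 2 ≤ K * δ) (hf₀ : f₀ ∈ lipUnitBall S K)
    [DecidablePred (· ∈ F)] :
    LipschitzOnWith K (fun x => if x ∈ F then f₀ x else -1)
      (F ∪ {x | ∀ y ∈ F, δ ≤ dist x y}) := by
  have near_far {x y : S} (hxy : δ ≤ dist x y) : |f₀ y + 1| ≤ K * dist x y := by
    have hy := abs_le.1 (hf₀.1 y)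
    have hKδ : K * δ ≤ K * dist x y := by gcongr
    rw [abs_le]
    constructor <;> linarith
  refine LipschitzOnWith.of_dist_le_mul fun x hx y hy => ?_
  by_cases hxF : x ∈ F <;> by_cases hyF : y ∈ F <;> simp only [hxF, hyF, if_true, if_false]
  · exact hf₀.2.dist_le_mul x y
  · rw [Real.dist_eq, sub_neg_eq_add, dist_comm x y]
    exact near_far (hy.resolve_left hyF x hxF)
  · rw [dist_comm, Real.dist_eq, sub_neg_eq_add]
    exact near_far (hx.resolve_left hxF y hyF)
  · simp only [dist_self]
    positivity

lemma exists_mem_lipUnitBall_eqOn_eq_neg_one (hK : 2 ≤ K * δ) (hf₀ : f₀ ∈ lipUnitBall S K)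
    (F : Set S) : ∃ f ∈ lipUnitBall S K, Set.EqOn f f₀ F ∧
      ∀ x, (∀ y ∈ F, δ ≤ dist x y) → f x = -1 := by
  classical
  obtain ⟨u, hu_lip, hu_eq⟩ := (lipschitzOnWith_ite_neg_one (F := F) hK hf₀).extend_real
  refine ⟨fun x => max (-1) (min 1 (u x)), ⟨fun x => ?_, (hu_lip.const_min 1).const_max (-1)⟩,
    fun x hx => ?_, fun x hx => ?_⟩
  · exact abs_le.2 ⟨le_max_left _ _, max_le (by norm_num) (min_le_left _ _)⟩
  · have hux : f₀ x = u x := by simpa only [hx, if_true] using hu_eq (Or.inl hx)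
    have hf₀x := abs_le.1 (hf₀.1 x)
    simp only [← hux, min_eq_right hf₀x.2, max_eq_right hf₀x.1]
  · have hδ : 0 < δ := pos_of_mul_pos_right (by linarith : 0 < K * δ) K.coe_nonneg
    have hxF : x ∉ F := fun hxF => by linarith [hx x hxF, dist_self x]
    have hux : -1 = u x := by simpa only [hxF, if_false] using hu_eq (Or.inr hx)
    norm_num [← hux]

-- With `g = f₀` on `F` and `g = -1` away from `F`, the function `g + h` equals `max g (h - 1)`,
-- so adding `h` costs nothing in the Lipschitz constant.
lemma exists_sub_eq_of_eq_zero_near (hK : 2 ≤ K * δ) (hf₀ : f₀ ∈ lipUnitBall S K)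
    (hh : h ∈ lipUnitBall S K) (h_nonneg : ∀ x, 0 ≤ h x)
    (h_near : ∀ x, ∀ y ∈ F, dist x y < δ → h x = 0) :
    ∃ f ∈ lipUnitBall S K, ∃ g ∈ lipUnitBall S K, Set.EqOn f f₀ F ∧ Set.EqOn g f₀ F ∧
      h = fun x => f x - g x := by
  obtain ⟨g, hg, hg_eq, hg_far⟩ := exists_mem_lipUnitBall_eqOn_eq_neg_one hK hf₀ F
  have hδ : 0 < δ := pos_of_mul_pos_right (by linarith : 0 < K * δ) K.coe_nonneg
  have max_eq_add (x : S) : max (g x) (h x - 1) = g x + h x := by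
    by_cases hx : ∀ y ∈ F, δ ≤ dist x y
    · rw [hg_far x hx, max_eq_right (by linarith [h_nonneg x])]
      ring
    · push Not at hx
      obtain ⟨y, hy, hxy⟩ := hx
      rw [h_near x y hy hxy, max_eq_left (by linarith [abs_le.1 (hg.1 x)]), add_zero]
  refine ⟨fun x => max (g x) (h x - 1), ⟨fun x => ?_, ?_⟩, g, hg, fun x hx => ?_, hg_eq, ?_⟩
  · have hgx := abs_le.1 (hg.1 x)
    exact abs_le.2 ⟨hgx.1.trans (le_max_left _ _),
      max_le hgx.2 (by linarith [abs_le.1 (hh.1 x)])⟩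
  · simpa using hg.2.max (hh.2.sub (LipschitzWith.const 1))
  · exact (max_eq_add x).trans (by rw [h_near x x hx (by simpa using hδ), add_zero, hg_eq hx])
  · simp only [max_eq_add, add_sub_cancel_left]

end LipschitzPerturbation

section UniformConvergence

lemma exists_isOpen_eventually_norm_le_of_tendsto_zero {X E : Type*} [TopologicalSpace X]
    [BaireSpace X] [Nonempty X] [SeminormedAddGroup E] {φ : ℕ → X → E}
    (hφ : ∀ n, Continuous (φ n)) (hlim : ∀ x, Tendsto (φ · x) atTop (𝓝 0)) {ε : ℝ} (hε : 0 < ε) :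
    ∃ U : Set X, IsOpen U ∧ U.Nonempty ∧ ∀ᶠ n in atTop, ∀ x ∈ U, ‖φ n x‖ ≤ ε := by
  let A : ℕ → Set X := fun N => ⋂ n ≥ N, {x | ‖φ n x‖ ≤ ε}
  have hA_closed (N : ℕ) : IsClosed (A N) :=
    isClosed_biInter fun n _ => isClosed_le (hφ n).norm continuous_const
  have hA_cover : ⋃ N, A N = Set.univ := by
    refine Set.eq_univ_of_forall fun x => ?_
    have hx : ∀ᶠ n in atTop, ‖φ n x‖ < ε := by
      simpa using (hlim x).norm.eventually_lt_const (by simpa using hε)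
    obtain ⟨N, hN⟩ := eventually_atTop.1 hx
    exact Set.mem_iUnion.2 ⟨N, Set.mem_iInter₂.2 fun n hn => (hN n hn).le⟩
  obtain ⟨N, hN⟩ := nonempty_interior_of_iUnion_of_closed hA_closed hA_cover
  refine ⟨interior (A N), isOpen_interior, hN, eventually_atTop.2 ⟨N, fun n hn x hx => ?_⟩⟩
  exact Set.mem_iInter₂.1 (interior_subset hx) n hn

variable {S : Type*} [PseudoMetricSpace S] [TopologicalSpace.SeparableSpace S] [MeasurableSpace S]
  [OpensMeasurableSpace S] {κ : ℕ → SignedMeasure S} {C δ ε : ℝ}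

lemma exists_finset_eventually_abs_pairing_le_of_eqOn
    (hlim : ∀ f, IsBL f → Tendsto (fun n => pairing (κ n) f) atTop (𝓝 0)) (K : ℝ≥0) (hε : 0 < ε) :
    ∃ f₀ ∈ lipUnitBall S K, ∃ F : Finset S, ∀ᶠ n in atTop, ∀ f ∈ lipUnitBall S K,
      Set.EqOn f f₀ F → |pairing (κ n) f| ≤ ε := by
  have : CompactSpace (lipUnitBall S K) := isCompact_iff_compactSpace.1 (isCompact_lipUnitBall K)
  have : Nonempty (lipUnitBall S K) := ⟨fun _ => 0, by simp, LipschitzWith.const' 0⟩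
  obtain ⟨U, hU_open, ⟨f₀, hf₀U⟩, hU⟩ := exists_isOpen_eventually_norm_le_of_tendsto_zero
    (fun n => continuous_pairing_lipUnitBall (κ n) K)
    (fun f => hlim f (isBL_of_mem_lipUnitBall f.2)) hε
  obtain ⟨V, hV_open, rfl⟩ := isOpen_induced_iff.1 hU_open
  obtain ⟨F, u, hu, huV⟩ := isOpen_pi_iff.1 hV_open f₀ hf₀U
  refine ⟨f₀, f₀.2, F, hU.mono fun n hn f hf hf_eq => hn ⟨f, hf⟩ (huV fun y hy => ?_)⟩
  exact Set.mem_of_eq_of_mem (hf_eq hy) (hu y hy).2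

lemma exists_finset_eventually_abs_pairing_posPart_le (hC : ∀ n, tvNorm (κ n) ≤ C)
    (hlim : ∀ f, IsBL f → Tendsto (fun n => pairing (κ n) f) atTop (𝓝 0)) (hδ : 0 < δ) :
    ∃ F : Finset S, ∀ᶠ n in atTop, ∀ g ∈ lipUnitBall S 1, (∀ y ∈ F, g y ≤ δ) →
      |pairing (κ n) (fun x => max (g x) 0)| ≤ 2 * δ * (1 + C) := by
  let K : ℝ≥0 := max 1 (2 / δ).toNNReal
  have hK : 2 ≤ K * δ := by
    rw [← div_le_iff₀ hδ]
    exact (Real.le_coe_toNNReal _).trans (NNReal.coe_le_coe.2 (le_max_right _ _))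
  obtain ⟨f₀, hf₀, F, hF⟩ := exists_finset_eventually_abs_pairing_le_of_eqOn hlim K hδ
  refine ⟨F, hF.mono fun n hn g hg hgF => ?_⟩
  let g_pos : S → ℝ := fun x => max (g x) 0
  let h : S → ℝ := fun x => max (g x - 2 * δ) 0
  have hg_pos : IsBL g_pos := isBL_of_mem_lipUnitBall (max_zero_mem_lipUnitBall hg)
  have hh : h ∈ lipUnitBall S 1 := max_sub_zero_mem_lipUnitBall hg (by positivity)
  have h_near (x y : S) (hy : y ∈ F) (hxy : dist x y < δ) : h x = 0 := by
    have hgxy := abs_le.1 (hg.2.dist_le_mul x y)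
    rw [NNReal.coe_one, one_mul] at hgxy
    exact max_eq_right (by linarith [hgF y hy])
  have h_small : |pairing (κ n) h| ≤ 2 * δ := by
    obtain ⟨f₁, hf₁, f₂, hf₂, hf₁F, hf₂F, h_eq⟩ := exists_sub_eq_of_eq_zero_near hK hf₀
      (lipUnitBall_mono (le_max_left _ _) hh) (fun x => le_max_right _ _) h_near
    rw [h_eq, pairing_sub_right ((isBL_of_mem_lipUnitBall hf₁).integrable _)
      ((isBL_of_mem_lipUnitBall hf₂).integrable _), two_mul]
    exact (abs_sub _ _).trans (add_le_add (hn f₁ hf₁ hf₁F) (hn f₂ hf₂ hf₂F))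
  have truncation (x : S) : |g_pos x - h x| ≤ 2 * δ := by
    simpa [abs_of_pos hδ] using abs_max_sub_max_le_abs (g x) (g x - 2 * δ) 0
  have truncation_small : |pairing (κ n) g_pos - pairing (κ n) h| ≤ 2 * δ * C := by
    rw [← pairing_sub_right (hg_pos.integrable _) ((isBL_of_mem_lipUnitBall hh).integrable _)]
    exact (abs_pairing_le _ truncation).trans (by gcongr; exact hC n)
  calc |pairing (κ n) g_pos|
      ≤ |pairing (κ n) g_pos - pairing (κ n) h| + |pairing (κ n) h| := by
        simpa using abs_add_le (pairing (κ n) g_pos - pairing (κ n) h) (pairing (κ n) h)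
    _ ≤ 2 * δ * C + 2 * δ := add_le_add truncation_small h_small
    _ = 2 * δ * (1 + C) := by ring

lemma exists_finset_eventually_abs_pairing_le (hC : ∀ n, tvNorm (κ n) ≤ C)
    (hlim : ∀ f, IsBL f → Tendsto (fun n => pairing (κ n) f) atTop (𝓝 0)) (hδ : 0 < δ) :
    ∃ F : Finset S, ∀ᶠ n in atTop, ∀ g ∈ lipUnitBall S 1, (∀ y ∈ F, |g y| ≤ δ) →
      |pairing (κ n) g| ≤ 4 * δ * (1 + C) := by
  obtain ⟨F, hF⟩ := exists_finset_eventually_abs_pairing_posPart_le hC hlim hδ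
  refine ⟨F, hF.mono fun n hn g hg hgF => ?_⟩
  have hpos := hn g hg fun y hy => (abs_le.1 (hgF y hy)).2
  have hneg := hn (-g) (neg_mem_lipUnitBall hg) fun y hy => by
    simpa using neg_le.1 (abs_le.1 (hgF y hy)).1
  have g_eq : g = fun x => max (g x) 0 - max ((-g) x) 0 :=
    funext fun x => (max_zero_sub_eq_self (g x)).symm
  calc |pairing (κ n) g|
      = |pairing (κ n) (fun x => max (g x) 0) - pairing (κ n) (fun x => max ((-g) x) 0)| := by
        conv_lhs => rw [g_eq]
        rw [pairing_sub_right]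
        · exact (isBL_of_mem_lipUnitBall (max_zero_mem_lipUnitBall hg)).integrable _
        · exact (isBL_of_mem_lipUnitBall
            (max_zero_mem_lipUnitBall (neg_mem_lipUnitBall hg))).integrable _
    _ ≤ 2 * δ * (1 + C) + 2 * δ * (1 + C) := (abs_sub _ _).trans (add_le_add hpos hneg)
    _ = 4 * δ * (1 + C) := by ring

theorem tendstoUniformlyOn_pairing_lipUnitBall (hC : ∀ n, tvNorm (κ n) ≤ C)
    (hlim : ∀ f, IsBL f → Tendsto (fun n => pairing (κ n) f) atTop (𝓝 0)) :
    TendstoUniformlyOn (fun n f => pairing (κ n) f) 0 atTop (lipUnitBall S 1) := by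
  rw [← tendstoLocallyUniformlyOn_iff_tendstoUniformlyOn_of_compact (isCompact_lipUnitBall 1),
    Metric.tendstoLocallyUniformlyOn_iff]
  intro ε hε p hp
  have hC_nonneg : 0 ≤ C := (tvNorm_nonneg (κ 0)).trans (hC 0)
  obtain ⟨δ, hδ, hδε⟩ : ∃ δ > 0, 8 * δ * (1 + C) = ε / 2 :=
    ⟨ε / (16 * (1 + C)), by positivity, by field_simp; norm_num⟩
  obtain ⟨F, hF⟩ := exists_finset_eventually_abs_pairing_le hC hlim hδ
  let U : Set (S → ℝ) := (F : Set S).pi fun y => Metric.ball (p y) (2 * δ)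
  have hU : U ∈ 𝓝 p :=
    set_pi_mem_nhds F.finite_toSet fun y _ => Metric.ball_mem_nhds _ (by positivity)
  have hp_small : ∀ᶠ n in atTop, |pairing (κ n) p| < ε / 2 := by
    simpa using (hlim p (isBL_of_mem_lipUnitBall hp)).abs.eventually_lt_const
      (by simpa using half_pos hε)
  refine ⟨lipUnitBall S 1 ∩ U, inter_mem_nhdsWithin _ hU, ?_⟩
  filter_upwards [hF, hp_small] with n hFn hpn f ⟨hf, hfU⟩
  have h_half := hFn _ (half_sub_mem_lipUnitBall hf hp) fun y hy => by
    have hfy : |f y - p y| < 2 * δ := hfU y hy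
    rw [abs_mul, abs_of_pos one_half_pos]
    linarith
  rw [pairing_const_mul, pairing_sub_right ((isBL_of_mem_lipUnitBall hf).integrable _)
    ((isBL_of_mem_lipUnitBall hp).integrable _), abs_mul, abs_of_pos one_half_pos] at h_half
  rw [Pi.zero_apply, dist_zero_left, Real.norm_eq_abs]
  linarith [abs_sub_abs_le_abs_sub (pairing (κ n) f) (pairing (κ n) p)]

end UniformConvergence

section DualNorm

variable {S : Type*} [PseudoMetricSpace S] [MeasurableSpace S]

lemma abs_pairing_le_blDualNorm (μ : SignedMeasure S) {f : S → ℝ} {C : ℝ} {K : ℝ≥0}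
    (hC : ∀ x, |f x| ≤ C) (hK : LipschitzWith K f) (hCK : C + K ≤ 1) :
    |pairing μ f| ≤ blDualNorm μ := by
  refine le_csSup ⟨1 * tvNorm μ, ?_⟩ ⟨f, C, K, hC, hK, hCK, rfl⟩
  rintro _ ⟨g, C', K', hC', -, hCK', rfl⟩
  exact abs_pairing_le μ fun x => (hC' x).trans (by linarith [K'.coe_nonneg])

lemma blDualNorm_le {μ : SignedMeasure S} {r : ℝ}
    (h : ∀ (f : S → ℝ) (C : ℝ) (K : ℝ≥0), (∀ x, |f x| ≤ C) → LipschitzWith K f → C + K ≤ 1 →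
      |pairing μ f| ≤ r) : blDualNorm μ ≤ r := by
  refine csSup_le ⟨_, fun _ => 0, 0, 0, by simp, LipschitzWith.const 0, by simp, rfl⟩ ?_
  rintro _ ⟨f, C, K, hC, hK, hCK, rfl⟩
  exact h f C K hC hK hCK

lemma blDualNorm_neg_le (μ : SignedMeasure S) : blDualNorm (-μ) ≤ blDualNorm μ :=
  blDualNorm_le fun f C K hC hK hCK => by
    rw [pairing_neg_left, abs_neg]
    exact abs_pairing_le_blDualNorm μ hC hK hCK

lemma blDualNorm_nonneg (μ : SignedMeasure S) : 0 ≤ blDualNorm μ :=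
  (abs_nonneg _).trans
    (abs_pairing_le_blDualNorm μ (f := 0) (C := 0) (by simp) (LipschitzWith.const 0) (by simp))

lemma blDualNorm_zero : blDualNorm (0 : SignedMeasure S) = 0 := by
  refine (blDualNorm_le fun f _ _ _ _ _ => ?_).antisymm (blDualNorm_nonneg 0)
  rw [pairing_zero_left, abs_zero]

lemma IsBL.exists_abs_pairing_le_mul_blDualNorm {f : S → ℝ} (hf : IsBL f) :
    ∃ R > 0, ∀ μ : SignedMeasure S, |pairing μ f| ≤ R * blDualNorm μ := by
  obtain ⟨⟨C, hC⟩, K, hK⟩ := hf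
  let R : ℝ≥0 := ‖C‖₊ + K + 1
  have hR : 0 < (R : ℝ) := by positivity
  refine ⟨R, hR, fun μ => ?_⟩
  have h_bound (x : S) : |(R⁻¹ : ℝ) * f x| ≤ (R⁻¹ : ℝ) * |C| := by
    rw [abs_mul, abs_of_pos (inv_pos.2 hR)]
    exact mul_le_mul_of_nonneg_left ((hC x).trans (le_abs_self C)) (inv_pos.2 hR).le
  have h_lip : LipschitzWith (R⁻¹ * K) fun x => (R⁻¹ : ℝ) * f x := by
    simpa [Function.comp_def] using (lipschitzWith_smul (R⁻¹ : ℝ)).comp hK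
  have h_le : (R⁻¹ : ℝ) * |C| + (R⁻¹ * K : ℝ≥0) ≤ 1 := by
    rw [NNReal.coe_mul, NNReal.coe_inv, ← mul_add, inv_mul_le_one₀ hR]
    simp [R]
  have h_scaled := abs_pairing_le_blDualNorm μ h_bound h_lip h_le
  rwa [pairing_const_mul, abs_mul, abs_of_pos (inv_pos.2 hR), inv_mul_le_iff₀ hR] at h_scaled

lemma tendsto_blDualNorm_zero [TopologicalSpace.SeparableSpace S] [OpensMeasurableSpace S]
    {κ : ℕ → SignedMeasure S} {C : ℝ} (hC : ∀ n, tvNorm (κ n) ≤ C)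
    (hlim : ∀ f, IsBL f → Tendsto (fun n => pairing (κ n) f) atTop (𝓝 0)) :
    Tendsto (fun n => blDualNorm (κ n)) atTop (𝓝 0) := by
  have h_uniform := Metric.tendstoUniformlyOn_iff.1 (tendstoUniformlyOn_pairing_lipUnitBall hC hlim)
  refine Metric.tendsto_nhds.2 fun ε hε => ?_
  filter_upwards [h_uniform (ε / 2) (half_pos hε)] with n hn
  rw [dist_zero_right, Real.norm_of_nonneg (blDualNorm_nonneg _)]
  refine (blDualNorm_le fun f B K hB hK hBK => ?_).trans_lt (half_lt_self hε)
  simpa using (hn f (mem_lipUnitBall_one hB hK hBK)).le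

variable [OpensMeasurableSpace S]

lemma blDualNorm_add_le (μ ν : SignedMeasure S) :
    blDualNorm (μ + ν) ≤ blDualNorm μ + blDualNorm ν :=
  blDualNorm_le fun f C K hC hK hCK => by
    have hf : IsBL f := ⟨⟨C, hC⟩, K, hK⟩
    rw [pairing_add_left (hf.integrable μ) (hf.integrable ν)]
    exact (abs_add_le _ _).trans (add_le_add (abs_pairing_le_blDualNorm μ hC hK hCK)
      (abs_pairing_le_blDualNorm ν hC hK hCK))

/-- The dual bounded Lipschitz norm bundled as a seminorm, giving access to the library's triangle
inequalities. -/
noncomputable def blDualSeminorm (S : Type*) [PseudoMetricSpace S] [MeasurableSpace S]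
    [OpensMeasurableSpace S] : AddGroupSeminorm (SignedMeasure S) where
  toFun := blDualNorm
  map_zero' := blDualNorm_zero
  add_le' := blDualNorm_add_le
  neg' μ := (blDualNorm_neg_le μ).antisymm (by simpa using blDualNorm_neg_le (-μ))

lemma abs_blDualNorm_sub_blDualNorm_le (μ ν : SignedMeasure S) :
    |blDualNorm μ - blDualNorm ν| ≤ blDualNorm (μ - ν) :=
  abs_sub_map_le_sub (blDualSeminorm S) μ ν

end DualNorm

section Topologies

variable {S : Type*} [PseudoMetricSpace S] [MeasurableSpace S]

lemma continuous_weakTop_pairing {f : S → ℝ} (hf : IsBL f) :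
    @Continuous _ _ (weakTop S) _ fun μ : SignedMeasure S => pairing μ f :=
  continuous_iff_le_induced.2 (iInf_le _ (⟨f, hf⟩ : {g : S → ℝ // IsBL g}))

lemma ball_mem_nhds_normTop (μ : SignedMeasure S) {ε : ℝ} (hε : 0 < ε) :
    {ν | blDualNorm (ν - μ) < ε} ∈ @nhds _ (normTop S) μ := by
  let _ := normTop S
  refine IsOpen.mem_nhds (TopologicalSpace.isOpen_generateFrom_of_mem ⟨μ, ε, hε, rfl⟩) ?_
  rwa [Set.mem_ofPred_eq, sub_self, blDualNorm_zero]

variable [OpensMeasurableSpace S]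

lemma continuous_normTop_pairing {f : S → ℝ} (hf : IsBL f) :
    @Continuous _ _ (normTop S) _ fun μ : SignedMeasure S => pairing μ f := by
  let _ := normTop S
  obtain ⟨R, hR, hRf⟩ := hf.exists_abs_pairing_le_mul_blDualNorm
  refine continuous_iff_continuousAt.2 fun μ => Metric.tendsto_nhds.2 fun ε hε => ?_
  filter_upwards [ball_mem_nhds_normTop μ (div_pos hε hR)] with ν hν
  calc |pairing ν f - pairing μ f| = |pairing (ν - μ) f| := by
        rw [pairing_sub_left (hf.integrable ν) (hf.integrable μ)]
    _ ≤ R * blDualNorm (ν - μ) := hRf _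
    _ < ε := (lt_div_iff₀' hR).1 hν

lemma normTop_le_weakTop : normTop S ≤ weakTop S :=
  le_iInf fun f => continuous_iff_le_induced.1 (continuous_normTop_pairing f.2)

variable [TopologicalSpace.SeparableSpace S]

lemma tendsto_blDualNorm_sub {s : ℕ → SignedMeasure S} {ν : SignedMeasure S} {C : ℝ}
    (hC : ∀ n, tvNorm (s n) ≤ C)
    (hs : ∀ f, IsBL f → Tendsto (fun n => pairing (s n) f) atTop (𝓝 (pairing ν f)))
    (μ : SignedMeasure S) :
    Tendsto (fun n => blDualNorm (s n - μ)) atTop (𝓝 (blDualNorm (ν - μ))) := by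
  have h_sub : Tendsto (fun n => blDualNorm (s n - ν)) atTop (𝓝 0) := by
    refine tendsto_blDualNorm_zero (C := C + tvNorm ν)
      (fun n => (tvNorm_sub_le _ _).trans (by gcongr; exact hC n)) fun f hf => ?_
    simpa only [pairing_sub_left (hf.integrable _) (hf.integrable _), sub_self]
      using (hs f hf).sub_const (pairing ν f)
  refine tendsto_iff_dist_tendsto_zero.2 (squeeze_zero (fun _ => dist_nonneg) (fun n => ?_) h_sub)
  simpa [Real.dist_eq] using abs_blDualNorm_sub_blDualNorm_le (s n - μ) (ν - μ)

theorem coincidence_of_topologies_general (M : Set (SignedMeasure S))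
    (hTV : ∃ C : ℝ, ∀ μ ∈ M, tvNorm μ ≤ C)
    (hseq : @SequentialSpace M
      (TopologicalSpace.induced ((↑) : M → SignedMeasure S) (weakTop S))) :
    TopologicalSpace.induced ((↑) : M → SignedMeasure S) (weakTop S) =
      TopologicalSpace.induced ((↑) : M → SignedMeasure S) (normTop S) := by
  obtain ⟨C, hC⟩ := hTV
  refine le_antisymm ?_ (induced_mono normTop_le_weakTop)
  let _ := weakTop S
  rw [← continuous_iff_le_induced]
  refine continuous_generateFrom_iff.2 ?_
  rintro _ ⟨μ, ε, -, rfl⟩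
  have h_cont : Continuous fun ν : M => blDualNorm (ν.1 - μ) := by
    refine continuous_iff_seqContinuous.2 fun s ν hs => ?_
    refine tendsto_blDualNorm_sub (fun n => hC _ (s n).2) (fun f hf => ?_) μ
    exact (((continuous_weakTop_pairing hf).comp continuous_subtype_val).tendsto ν).comp hs
  exact isOpen_Iio.preimage h_cont

end Topologies

/-- If `M ⊆ M(S)` is bounded in total variation norm and the restricted
`σ(M(S), BL(S))`-weak topology on `M` is first countable, then on `M` the weak topology
coincides with the `‖·‖*_BL`-norm topology. -/
theorem coincidence_of_topologies {S : Type*} [MetricSpace S] [CompleteSpace S]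
    [TopologicalSpace.SeparableSpace S] [MeasurableSpace S] [BorelSpace S]
    (M : Set (SignedMeasure S)) (hTV : ∃ C : ℝ, ∀ μ ∈ M, tvNorm μ ≤ C)
    (hfc : @FirstCountableTopology M
      (TopologicalSpace.induced ((↑) : M → SignedMeasure S) (weakTop S))) :
    TopologicalSpace.induced ((↑) : M → SignedMeasure S) (weakTop S) =
      TopologicalSpace.induced ((↑) : M → SignedMeasure S) (normTop S) := by
  let _ := weakTop S
  exact coincidence_of_topologies_general M hTV inferInstance
end

section
/- Let S be a Polish space (a separable completely metrizable topological space) and let (μ_n) be a sequence of finite signed Borel measures on S such that for every bounded continuous function f : S → ℝ the sequence ∫_S f dμ_n converges in ℝ. Then there exists a finite signed Borel measure μ_* on S such that ∫_S f dμ_n → ∫_S f dμ_* for every bounded continuous f : S → ℝ. -/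
open MeasureTheory Filter Topology

open Metric Set TopologicalSpace
open scoped BoundedContinuousFunction ENNReal NNReal

/-!
Since `C_b(S)` is dense in `L¹(|μ|)`, `∫ h d|μ|` for `h ≥ 0` is the supremum of `⟨μ, h g⟩` over
`g ∈ C_b(S)` with `‖g‖ ≤ 1`. With `h = 1`, the uniform boundedness principle bounds the total
variations `|μₙ|(S)`.

The key step is that the `|μₙ|` are uniformly tight. Let `(Uᵢ)` be a countable open cover and `(ρᵢ)`
a subordinate partition of unity. The maps `c ↦ ⟨μₙ, ∑ ρᵢ cᵢ⟩` are continuous and pointwise Cauchy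
on the product of countably many unit balls of `C_b(S)`, a Baire space. They are therefore uniformly
Cauchy, up to `ε`, on a nonempty open set, and such a set contains a point `c` together with every
point that agrees with `c` on some finite `I`. Varying the coordinates outside `I` shows that
`⟨μₙ, h g⟩`, where `h = 1 - ∑_{i ∈ I} ρᵢ`, is Cauchy up to `2ε`, uniformly in `‖g‖ ≤ 1`. This
controls `∫ h d|μₙ|`, and with it the mass of `|μₙ|` outside `⋃_{i ∈ I} Uᵢ`. Covers by balls of
radius tending to zero then give compact sets.

By Prokhorov's theorem the positive and negative parts of `μₙ` converge weakly along an ultrafilter.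
Since `⟨μₙ, f⟩` converges, its limit is the one along the ultrafilter.
-/

section Pairing

variable {S : Type*} [MeasurableSpace S] {μ : SignedMeasure S} {f : S → ℝ}

lemma integrable_toSignedMeasure {p : Measure S} [IsFiniteMeasure p] (hf : Integrable f p) :
    p.toSignedMeasure.Integrable f := by
  rwa [VectorMeasure.Integrable, Measure.variation_toSignedMeasure]

lemma vectorIntegral_toSignedMeasure_sub {p q : Measure S} [IsFiniteMeasure p] [IsFiniteMeasure q]
    (hp : Integrable f p) (hq : Integrable f q) :
    (p.toSignedMeasure - q.toSignedMeasure).integral f (ContinuousLinearMap.lsmul ℝ ℝ).flip =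
      ∫ x, f x ∂p - ∫ x, f x ∂q := by
  simp only [VectorMeasure.integral_sub_vectorMeasure (integrable_toSignedMeasure hp)
    (integrable_toSignedMeasure hq), VectorMeasure.integral_toSignedMeasure]

lemma pairing_eq_vectorIntegral (hf : Integrable f μ.totalVariation) :
    pairing μ f = μ.integral f (ContinuousLinearMap.lsmul ℝ ℝ).flip := by
  conv_rhs => rw [← μ.toSignedMeasure_toJordanDecomposition]
  exact (vectorIntegral_toSignedMeasure_sub hf.left_of_add_measure hf.right_of_add_measure).symm

lemma pairing_toSignedMeasure_sub_s17 {p q : Measure S} [IsFiniteMeasure p] [IsFiniteMeasure q]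
    (hp : Integrable f p) (hq : Integrable f q) :
    pairing (p.toSignedMeasure - q.toSignedMeasure) f = ∫ x, f x ∂p - ∫ x, f x ∂q := by
  have hpq : Integrable f (p.toSignedMeasure - q.toSignedMeasure).totalVariation := by
    rw [SignedMeasure.totalVariation_eq_variation]
    exact (integrable_toSignedMeasure hp).sub_vectorMeasure (integrable_toSignedMeasure hq)
  rw [pairing_eq_vectorIntegral hpq, vectorIntegral_toSignedMeasure_sub hp hq]

lemma exists_sign_pairing_eq_integral (μ : SignedMeasure S) :
    ∃ s : S → ℝ, Measurable s ∧ (∀ x, |s x| = 1) ∧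
      ∀ f, Integrable f μ.totalVariation → pairing μ f = ∫ x, s x * f x ∂μ.totalVariation := by
  classical
  obtain ⟨A, hA, hposA, hnegA⟩ := μ.toJordanDecomposition.mutuallySingular
  let s : S → ℝ := A.piecewise (-1) 1
  have hs : Measurable s := measurable_one.neg.piecewise hA measurable_one
  have hs_abs : ∀ x, |s x| = 1 := fun x => by by_cases hx : x ∈ A <;> simp [s, hx]
  refine ⟨s, hs, hs_abs, fun f hf => ?_⟩
  have hsf : Integrable (fun x => s x * f x) μ.totalVariation :=
    hf.bdd_mul hs.aestronglyMeasurable (ae_of_all _ fun x => (hs_abs x).le)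
  have hpos : ∫ x, s x * f x ∂μ.toJordanDecomposition.posPart =
      ∫ x, f x ∂μ.toJordanDecomposition.posPart := by
    refine integral_congr_ae ?_
    filter_upwards [measure_eq_zero_iff_ae_notMem.1 hposA] with x hx
    simp [s, hx]
  have hneg : ∫ x, s x * f x ∂μ.toJordanDecomposition.negPart =
      -∫ x, f x ∂μ.toJordanDecomposition.negPart := by
    rw [← integral_neg]
    refine integral_congr_ae ?_
    filter_upwards [measure_eq_zero_iff_ae_notMem.1 hnegA] with x hx
    simp [s, not_not.1 hx]
  rw [SignedMeasure.totalVariation,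
    integral_add_measure hsf.left_of_add_measure hsf.right_of_add_measure, hpos, hneg, pairing,
    sub_eq_add_neg]

lemma abs_pairing_le_integral_abs (hf : Integrable f μ.totalVariation) :
    |pairing μ f| ≤ ∫ x, |f x| ∂μ.totalVariation := by
  obtain ⟨s, -, hs_abs, hs⟩ := exists_sign_pairing_eq_integral μ
  rw [hs f hf]
  refine abs_integral_le_integral_abs.trans_eq ?_
  simp only [abs_mul, hs_abs, one_mul]

end Pairing

section Duality

variable {S : Type*} [TopologicalSpace S] [MeasurableSpace S]

/-- The functional `f ↦ ⟨μ, f⟩` on `C_b(S)`, continuous for the supremum norm. -/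
noncomputable def pairingCLM [OpensMeasurableSpace S] (μ : SignedMeasure S) :
    (S →ᵇ ℝ) →L[ℝ] ℝ :=
  LinearMap.mkContinuous
    { toFun f := pairing μ f
      map_add' f g := by
        simp only [pairing, BoundedContinuousFunction.add_apply,
          integral_add (f.integrable _) (g.integrable _)]
        ring
      map_smul' c f := by
        simp only [pairing, BoundedContinuousFunction.smul_apply, integral_smul, smul_sub,
          RingHom.id_apply] }
    (μ.totalVariation.real univ) fun f =>
      (abs_pairing_le_integral_abs (f.integrable _)).trans <|
        integral_mono_of_nonneg (ae_of_all _ fun _ => abs_nonneg _) (integrable_const ‖f‖)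
          (ae_of_all _ f.norm_coe_le_norm) |>.trans_eq <| by rw [integral_const, smul_eq_mul]

lemma abs_pairing_mul_le_integral_totalVariation [OpensMeasurableSpace S] {μ : SignedMeasure S}
    {h g : S →ᵇ ℝ} (hh : ∀ x, 0 ≤ h x) (hg : ‖g‖ ≤ 1) :
    |pairing μ ⇑(h * g)| ≤ ∫ x, h x ∂μ.totalVariation := by
  refine (abs_pairing_le_integral_abs ((h * g).integrable _)).trans <|
    integral_mono ((h * g).integrable _).abs (h.integrable _) fun x => ?_
  simp only [BoundedContinuousFunction.mul_apply, abs_mul, abs_of_nonneg (hh x)]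
  exact mul_le_of_le_one_right (hh x) ((g.norm_coe_le_norm x).trans hg)

variable [NormalSpace S] [BorelSpace S]

lemma exists_boundedContinuous_norm_le_integral_abs_sub_le {P : Measure S} [P.WeaklyRegular]
    {s : S → ℝ} (hs : Integrable s P) {C : ℝ} (hC : 0 ≤ C) (hsC : ∀ x, |s x| ≤ C) {ε : ℝ}
    (hε : 0 < ε) : ∃ g : S →ᵇ ℝ, ‖g‖ ≤ C ∧ ∫ x, |s x - g x| ∂P ≤ ε := by
  obtain ⟨g, hgε, hg⟩ := hs.exists_boundedContinuous_integral_sub_le hε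
  let clip : ℝ → ℝ := fun t => projIcc (-C) C (neg_le_self hC) t
  have hclip_abs : ∀ t, |clip t| ≤ C := fun t => abs_le.2 (projIcc _ _ _ t).2
  have hclip : ∀ x, |s x - clip (g x)| ≤ |s x - g x| := fun x => by
    have hsx : clip (s x) = s x := by
      simp only [clip, projIcc_of_mem _ (abs_le.1 (hsC x))]
    conv_lhs => rw [← hsx]
    exact abs_projIcc_sub_projIcc (neg_le_self hC)
  let g' : S →ᵇ ℝ := .ofNormedAddCommGroup (fun x => clip (g x))
    (continuous_subtype_val.comp (continuous_projIcc.comp g.continuous)) C fun x => hclip_abs _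
  refine ⟨g', BoundedContinuousFunction.norm_ofNormedAddCommGroup_le _ hC _, ?_⟩
  calc ∫ x, |s x - g' x| ∂P
      ≤ ∫ x, |s x - g x| ∂P :=
        integral_mono_of_nonneg (ae_of_all _ fun _ => abs_nonneg _) (hs.sub hg).abs
          (ae_of_all _ hclip)
    _ ≤ ε := hgε

lemma integral_totalVariation_le_of_forall_pairing_mul_le {μ : SignedMeasure S}
    [μ.totalVariation.WeaklyRegular] {h : S →ᵇ ℝ} {C : ℝ}
    (hC : ∀ g : S →ᵇ ℝ, ‖g‖ ≤ 1 → pairing μ ⇑(h * g) ≤ C) :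
    ∫ x, h x ∂μ.totalVariation ≤ C := by
  obtain ⟨s, hs_meas, hs_abs, hs⟩ := exists_sign_pairing_eq_integral μ
  have hs_int : Integrable s μ.totalVariation :=
    .of_bound hs_meas.aestronglyMeasurable 1 (ae_of_all _ fun x => (hs_abs x).le)
  refine le_of_forall_pos_le_add fun ε hε => ?_
  obtain ⟨δ, hδ, hδε⟩ := exists_pos_mul_lt hε ‖h‖
  obtain ⟨g, hg, hgδ⟩ := exists_boundedContinuous_norm_le_integral_abs_sub_le hs_int zero_le_one
    (fun x => (hs_abs x).le) hδ
  have hshg : Integrable (fun x => s x * (h * g) x) μ.totalVariation :=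
    ((h * g).integrable _).bdd_mul hs_meas.aestronglyMeasurable
      (ae_of_all _ fun x => (hs_abs x).le)
  have hpointwise : ∀ x, h x - s x * (h * g) x ≤ ‖h‖ * |s x - g x| := fun x => by
    have hs_sq : s x * s x = 1 := by rw [← abs_mul_abs_self, hs_abs, one_mul]
    calc h x - s x * (h * g) x = h x * (s x * (s x - g x)) := by
          rw [BoundedContinuousFunction.mul_apply]; linear_combination -h x * hs_sq
      _ ≤ |h x| * |s x - g x| := by
          refine (le_abs_self _).trans_eq ?_
          rw [abs_mul, abs_mul, hs_abs, one_mul]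
      _ ≤ ‖h‖ * |s x - g x| := by
          gcongr
          exact h.norm_coe_le_norm x
  have hgap : ∫ x, h x ∂μ.totalVariation - pairing μ ⇑(h * g) ≤ ε :=
    calc ∫ x, h x ∂μ.totalVariation - pairing μ ⇑(h * g)
        = ∫ x, (h x - s x * (h * g) x) ∂μ.totalVariation := by
          rw [hs _ ((h * g).integrable _), integral_sub (h.integrable _) hshg]
      _ ≤ ∫ x, ‖h‖ * |s x - g x| ∂μ.totalVariation :=
          integral_mono ((h.integrable _).sub hshg)
            ((hs_int.sub (g.integrable _)).abs.const_mul _) hpointwise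
      _ ≤ ‖h‖ * δ := by
          rw [integral_const_mul]
          gcongr
      _ ≤ ε := hδε.le
  linarith [hC g hg]

lemma totalVariation_real_univ_le_norm_pairingCLM (μ : SignedMeasure S)
    [μ.totalVariation.WeaklyRegular] : μ.totalVariation.real univ ≤ ‖pairingCLM μ‖ := by
  have hone : ∫ x, (1 : S →ᵇ ℝ) x ∂μ.totalVariation ≤ ‖pairingCLM μ‖ := by
    refine integral_totalVariation_le_of_forall_pairing_mul_le fun g hg => ?_
    rw [one_mul]
    exact (le_abs_self _).trans ((pairingCLM μ).unit_le_opNorm g hg)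
  simpa using hone

lemma exists_forall_totalVariation_real_univ_le {ι : Type*} {μ : ι → SignedMeasure S}
    [∀ i, (μ i).totalVariation.WeaklyRegular]
    (hμ : ∀ f : S →ᵇ ℝ, BddAbove (range fun i => |pairing (μ i) f|)) :
    ∃ C, ∀ i, (μ i).totalVariation.real univ ≤ C := by
  obtain ⟨C, hC⟩ := banach_steinhaus (g := fun i => pairingCLM (μ i)) fun f =>
    (hμ f).imp fun C hC i => hC (mem_range_self i)
  exact ⟨C, fun i => (totalVariation_real_univ_le_norm_pairingCLM (μ i)).trans (hC i)⟩

end Duality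

section Baire

lemma exists_nonempty_interior_setOfPred_forall_dist_le {X Y : Type*} [TopologicalSpace X]
    [BaireSpace X] [Nonempty X] [PseudoMetricSpace Y] {F : ℕ → X → Y}
    (hF : ∀ n, Continuous (F n)) (hcauchy : ∀ x, CauchySeq fun n => F n x) {ε : ℝ} (hε : 0 < ε) :
    ∃ N, (interior {x | ∀ m ≥ N, dist (F m x) (F N x) ≤ ε}).Nonempty := by
  refine nonempty_interior_of_iUnion_of_closed (fun N => ?_) (eq_univ_of_forall fun x => ?_)
  · simp only [ofPred_forall]
    exact isClosed_biInter fun m _ => isClosed_le ((hF m).dist (hF N)) continuous_const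
  · obtain ⟨N, hN⟩ := Metric.cauchySeq_iff'.1 (hcauchy x) ε hε
    exact mem_iUnion.2 ⟨N, fun m hm => (hN m hm).le⟩

lemma exists_finset_forall_eqOn_forall_dist_le {ι Y : Type*} {X : ι → Type*}
    [∀ i, TopologicalSpace (X i)] [BaireSpace (∀ i, X i)] [Nonempty (∀ i, X i)]
    [PseudoMetricSpace Y] {F : ℕ → (∀ i, X i) → Y} (hF : ∀ n, Continuous (F n))
    (hcauchy : ∀ x, CauchySeq fun n => F n x) {ε : ℝ} (hε : 0 < ε) :
    ∃ (N : ℕ) (I : Finset ι) (x₀ : ∀ i, X i), ∀ x, (∀ i ∈ I, x i = x₀ i) →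
      ∀ m ≥ N, dist (F m x) (F N x) ≤ ε := by
  obtain ⟨N, x₀, hx₀⟩ := exists_nonempty_interior_setOfPred_forall_dist_le hF hcauchy hε
  obtain ⟨I, V, hV, hIV⟩ := isOpen_pi_iff.1 isOpen_interior x₀ hx₀
  refine ⟨N, I, x₀, fun x hx => interior_subset (hIV fun i hi => ?_)⟩
  rw [hx i hi]
  exact (hV i hi).2

end Baire

section PartitionOfUnity

variable {ι S : Type*} [TopologicalSpace S] (ρ : PartitionOfUnity ι S univ)

/-- The bounded continuous function `∑ ρᵢ cᵢ`, for `cᵢ` in the unit ball of `C_b(S)`. The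
coefficients form one point `c` of the product of the unit balls, a Baire space. -/
noncomputable def partitionGlue (c : ι → closedBall (0 : S →ᵇ ℝ) 1) : S →ᵇ ℝ :=
  .ofNormedAddCommGroup (fun x => ∑ᶠ i, ρ i x • (c i : S →ᵇ ℝ) x)
    (ρ.continuous_finsum_smul fun i x _ => (c i : S →ᵇ ℝ).continuous.continuousAt) 1 fun x => by
      refine mem_closedBall_zero_iff.1 ?_
      refine ρ.finsum_smul_mem_convex (mem_univ x) (fun i _ => ?_) (convex_closedBall 0 1)
      rw [mem_closedBall_zero_iff]
      exact ((c i : S →ᵇ ℝ).norm_coe_le_norm x).trans (mem_closedBall_zero_iff.1 (c i).2)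

/-- The part `1 - ∑_{i ∈ I} ρᵢ` of a partition of unity outside a finite set of indices. It equals
`1` off the supports of the `ρᵢ`, `i ∈ I`, so its integral bounds the mass there. -/
noncomputable def partitionTail (I : Finset ι) : S →ᵇ ℝ :=
  1 - ∑ i ∈ I, .ofNormedAddCommGroup (ρ i) (ρ i).continuous 1 fun x => by
    rw [Real.norm_of_nonneg (ρ.nonneg i x)]
    exact ρ.le_one i x

variable {ρ}

lemma partitionGlue_apply_eq_sum {c : ι → closedBall (0 : S →ᵇ ℝ) 1} {x : S} {J : Finset ι}
    (hJ : ρ.finsupport x ⊆ J) : partitionGlue ρ c x = ∑ i ∈ J, ρ i x * (c i : S →ᵇ ℝ) x := by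
  refine finsum_eq_sum_of_support_subset _ fun i hi => hJ ?_
  rw [ρ.mem_finsupport]
  exact left_ne_zero_of_mul hi

lemma continuous_partitionGlue_apply (x : S) : Continuous fun c => partitionGlue ρ c x := by
  simp only [fun c => partitionGlue_apply_eq_sum (c := c) (subset_refl (ρ.finsupport x))]
  fun_prop

lemma norm_partitionGlue_le_one (c : ι → closedBall (0 : S →ᵇ ℝ) 1) : ‖partitionGlue ρ c‖ ≤ 1 :=
  BoundedContinuousFunction.norm_ofNormedAddCommGroup_le _ zero_le_one _

lemma partitionTail_apply (I : Finset ι) (x : S) : partitionTail ρ I x = 1 - ∑ i ∈ I, ρ i x := by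
  simp [partitionTail]

lemma partitionTail_apply_eq_sum_sdiff [DecidableEq ι] {I J : Finset ι} (hIJ : I ⊆ J) {x : S}
    (hJ : ρ.finsupport x ⊆ J) : partitionTail ρ I x = ∑ i ∈ J \ I, ρ i x := by
  rw [partitionTail_apply, ← ρ.sum_finsupport' (mem_univ x) hJ, ← Finset.sum_sdiff hIJ,
    add_sub_cancel_right]

lemma partitionTail_nonneg (I : Finset ι) (x : S) : 0 ≤ partitionTail ρ I x := by
  classical
  rw [partitionTail_apply_eq_sum_sdiff Finset.subset_union_left
    (Finset.subset_union_right (s₂ := ρ.finsupport x))]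
  exact Finset.sum_nonneg fun i _ => ρ.nonneg i x

lemma partitionTail_le_one (I : Finset ι) (x : S) : partitionTail ρ I x ≤ 1 := by
  rw [partitionTail_apply]
  exact sub_le_self _ (Finset.sum_nonneg fun i _ => ρ.nonneg i x)

lemma partitionTail_eq_one_of_notMem {U : ι → Set S} (hU : ρ.IsSubordinate U) {I : Finset ι} {x : S}
    (hx : x ∉ ⋃ i ∈ I, U i) : partitionTail ρ I x = 1 := by
  rw [partitionTail_apply, Finset.sum_eq_zero, sub_zero]
  intro i hi
  by_contra hne
  exact hx (mem_biUnion hi (hU i (subset_tsupport _ hne)))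

lemma partitionTail_eq_zero_of_finsupport_subset {I : Finset ι} {x : S} (hI : ρ.finsupport x ⊆ I) :
    partitionTail ρ I x = 0 := by
  rw [partitionTail_apply, ρ.sum_finsupport' (mem_univ x) hI, sub_self]

lemma partitionGlue_piecewise_sub_partitionGlue_piecewise [DecidableEq ι] (I : Finset ι)
    (c : ι → closedBall (0 : S →ᵇ ℝ) 1) (g h : closedBall (0 : S →ᵇ ℝ) 1) :
    partitionGlue ρ (I.piecewise c fun _ => g) - partitionGlue ρ (I.piecewise c fun _ => h) =
      partitionTail ρ I * ((g : S →ᵇ ℝ) - h) := by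
  ext x
  have hJ : ρ.finsupport x ⊆ I ∪ ρ.finsupport x := Finset.subset_union_right
  rw [BoundedContinuousFunction.sub_apply, BoundedContinuousFunction.mul_apply,
    BoundedContinuousFunction.sub_apply, partitionGlue_apply_eq_sum hJ,
    partitionGlue_apply_eq_sum hJ, partitionTail_apply_eq_sum_sdiff Finset.subset_union_left hJ,
    ← Finset.sum_sub_distrib, Finset.sum_mul, ← Finset.sum_sdiff Finset.subset_union_left]
  have hI : ∀ i ∈ I, ρ i x * (I.piecewise c (fun _ => g) i : S →ᵇ ℝ) x -
      ρ i x * (I.piecewise c (fun _ => h) i : S →ᵇ ℝ) x = 0 := fun i hi => by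
    rw [I.piecewise_eq_of_mem _ _ hi, I.piecewise_eq_of_mem _ _ hi, sub_self]
  rw [Finset.sum_eq_zero hI, add_zero]
  refine Finset.sum_congr rfl fun i hi => ?_
  have hi' := (Finset.mem_sdiff.1 hi).2
  rw [I.piecewise_eq_of_notMem _ _ hi', I.piecewise_eq_of_notMem _ _ hi', mul_sub]

variable [Countable ι] [MeasurableSpace S] [OpensMeasurableSpace S]

lemma tendsto_integral_partitionTail (P : Measure S) [IsFiniteMeasure P] :
    Tendsto (fun I => ∫ x, partitionTail ρ I x ∂P) atTop (𝓝 0) := by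
  rw [← integral_zero S ℝ (μ := P)]
  refine tendsto_integral_filter_of_dominated_convergence (fun _ => 1)
    (.of_forall fun I => (partitionTail ρ I).continuous.aestronglyMeasurable)
    (.of_forall fun I => ae_of_all _ fun x => ?_) (integrable_const 1) (ae_of_all _ fun x => ?_)
  · rw [Real.norm_of_nonneg (partitionTail_nonneg I x)]
    exact partitionTail_le_one I x
  · refine tendsto_const_nhds.congr' ?_
    filter_upwards [eventually_ge_atTop (ρ.finsupport x)] with I hI
    exact (partitionTail_eq_zero_of_finsupport_subset hI).symm

lemma continuous_integral_partitionGlue (P : Measure S) [IsFiniteMeasure P] :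
    Continuous fun c => ∫ x, partitionGlue ρ c x ∂P := by
  refine continuous_of_dominated (bound := fun _ => 1)
    (fun c => (partitionGlue ρ c).continuous.aestronglyMeasurable)
    (fun c => ae_of_all _ fun x => ?_) (integrable_const 1)
    (ae_of_all _ continuous_partitionGlue_apply)
  exact ((partitionGlue ρ c).norm_coe_le_norm x).trans (norm_partitionGlue_le_one c)

end PartitionOfUnity

section UniformTightness

variable {ι S : Type*} [Countable ι] [TopologicalSpace S] [MeasurableSpace S]
  {μ : ℕ → SignedMeasure S}

lemma exists_finset_forall_abs_pairing_partitionTail_mul_sub_le [OpensMeasurableSpace S]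
    (hμ : ∀ f : S →ᵇ ℝ, CauchySeq fun n => pairing (μ n) f) (ρ : PartitionOfUnity ι S univ) {ε : ℝ}
    (hε : 0 < ε) :
    ∃ (N : ℕ) (I : Finset ι), ∀ J, I ⊆ J → ∀ g : S →ᵇ ℝ, ‖g‖ ≤ 1 → ∀ m ≥ N,
      |pairing (μ m) ⇑(partitionTail ρ J * g) - pairing (μ N) ⇑(partitionTail ρ J * g)| ≤ ε := by
  classical
  have : CompleteSpace (closedBall (0 : S →ᵇ ℝ) 1) := isClosed_closedBall.completeSpace_coe
  have hcont : ∀ n, Continuous fun c => pairing (μ n) (partitionGlue ρ c) := fun n =>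
    (continuous_integral_partitionGlue _).sub (continuous_integral_partitionGlue _)
  obtain ⟨N, I, c, hc⟩ := exists_finset_forall_eqOn_forall_dist_le hcont
    (fun c => hμ (partitionGlue ρ c)) (half_pos hε)
  refine ⟨N, I, fun J hIJ g hg m hm => ?_⟩
  let zero : closedBall (0 : S →ᵇ ℝ) 1 := ⟨0, mem_closedBall_self zero_le_one⟩
  let g' : closedBall (0 : S →ᵇ ℝ) 1 := ⟨g, mem_closedBall_zero_iff.2 hg⟩
  have hagree : ∀ h, ∀ i ∈ I, J.piecewise c (fun _ => h) i = c i := fun h i hi =>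
    J.piecewise_eq_of_mem _ _ (hIJ hi)
  have hsplit : ∀ n, pairing (μ n) ⇑(partitionTail ρ J * g) =
      pairing (μ n) (partitionGlue ρ (J.piecewise c fun _ => g')) -
        pairing (μ n) (partitionGlue ρ (J.piecewise c fun _ => zero)) := fun n => by
    have hglue := partitionGlue_piecewise_sub_partitionGlue_piecewise (ρ := ρ) J c g' zero
    rw [sub_zero] at hglue
    rw [← hglue]
    exact map_sub (pairingCLM (μ n)) _ _
  rw [hsplit, hsplit, sub_sub_sub_comm]
  exact (abs_sub _ _).trans ((add_le_add (hc _ (hagree g') m hm) (hc _ (hagree zero) m hm)).trans_eq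
    (add_halves ε))

lemma exists_finset_forall_integral_partitionTail_totalVariation_le [NormalSpace S] [BorelSpace S]
    [∀ n, (μ n).totalVariation.WeaklyRegular]
    (hμ : ∀ f : S →ᵇ ℝ, CauchySeq fun n => pairing (μ n) f) (ρ : PartitionOfUnity ι S univ) {ε : ℝ}
    (hε : 0 < ε) :
    ∃ J : Finset ι, ∀ n, ∫ x, partitionTail ρ J x ∂(μ n).totalVariation ≤ ε := by
  obtain ⟨N, I, hI⟩ := exists_finset_forall_abs_pairing_partitionTail_mul_sub_le hμ ρ (half_pos hε)
  have hsmall : ∀ᶠ J : Finset ι in atTop, ∀ n ∈ Finset.Iic N,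
      ∫ x, partitionTail ρ J x ∂(μ n).totalVariation ≤ ε / 2 :=
    (Finset.eventually_all _).2 fun n _ =>
      (tendsto_integral_partitionTail _).eventually_le_const (half_pos hε)
  obtain ⟨J, hIJ, hJ⟩ := ((eventually_ge_atTop I).and hsmall).exists
  refine ⟨J, fun n => ?_⟩
  rcases le_total n N with hn | hn
  · exact (hJ n (Finset.mem_Iic.2 hn)).trans (half_le_self hε.le)
  refine integral_totalVariation_le_of_forall_pairing_mul_le fun g hg => ?_
  have hN : |pairing (μ N) ⇑(partitionTail ρ J * g)| ≤ ε / 2 :=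
    (abs_pairing_mul_le_integral_totalVariation (partitionTail_nonneg J) hg).trans
      (hJ N (Finset.mem_Iic.2 le_rfl))
  linarith [le_abs_self (pairing (μ N) ⇑(partitionTail ρ J * g)), (abs_le.1 (hI J hIJ g hg n hn)).2]

lemma exists_finset_forall_totalVariation_compl_le [PseudoMetrizableSpace S] [BorelSpace S]
    (hμ : ∀ f : S →ᵇ ℝ, CauchySeq fun n => pairing (μ n) f) {U : ι → Set S}
    (hU : ∀ i, IsOpen (U i)) (hcover : ⋃ i, U i = univ) {ε : ℝ≥0∞} (hε : 0 < ε) :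
    ∃ I : Finset ι, ∀ n, (μ n).totalVariation (⋃ i ∈ I, U i)ᶜ ≤ ε := by
  let := pseudoMetrizableSpacePseudoMetric S
  obtain ⟨ρ, hρ⟩ := PartitionOfUnity.exists_isSubordinate isClosed_univ U hU hcover.ge
  obtain ⟨δ, hδ, hδε⟩ := ENNReal.lt_iff_exists_nnreal_btwn.1 hε
  obtain ⟨I, hI⟩ := exists_finset_forall_integral_partitionTail_totalVariation_le hμ ρ
    (NNReal.coe_pos.2 (ENNReal.coe_pos.1 hδ))
  refine ⟨I, fun n => ?_⟩
  have hsub : (⋃ i ∈ I, U i)ᶜ ⊆ {x | 1 ≤ partitionTail ρ I x} := fun x hx =>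
    (partitionTail_eq_one_of_notMem hρ hx).ge
  have hreal : (μ n).totalVariation.real (⋃ i ∈ I, U i)ᶜ ≤ δ :=
    calc (μ n).totalVariation.real (⋃ i ∈ I, U i)ᶜ
        ≤ (μ n).totalVariation.real {x | 1 ≤ partitionTail ρ I x} := measureReal_mono hsub
      _ ≤ ∫ x, partitionTail ρ I x ∂(μ n).totalVariation := by
          simpa only [one_mul] using mul_meas_ge_le_integral_of_nonneg
            (ae_of_all _ (partitionTail_nonneg I)) ((partitionTail ρ I).integrable _) 1
      _ ≤ δ := hI n
  exact ((ENNReal.le_ofReal_iff_toReal_le (measure_ne_top _ _) δ.2).2 hreal |>.trans_eq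
    (ENNReal.ofReal_coe_nnreal)).trans hδε.le

end UniformTightness

section Tightness

variable {S : Type*} [PseudoMetricSpace S] [CompleteSpace S]

lemma isCompact_iInter_biUnion_closedBall {u : ℕ → ℝ} (hu : Tendsto u atTop (𝓝 0)) (d : ℕ → S)
    (I : ℕ → Finset ℕ) : IsCompact (⋂ k, ⋃ i ∈ I k, closedBall (d i) (u k)) := by
  refine isCompact_iff_totallyBounded_isComplete.2 ⟨?_, ?_⟩
  · refine Metric.totallyBounded_iff.2 fun ε hε => ?_
    obtain ⟨k, hk⟩ := (hu.eventually_lt_const hε).exists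
    refine ⟨d '' I k, (I k).finite_toSet.image d, (iInter_subset _ k).trans ?_⟩
    rw [biUnion_image]
    exact biUnion_mono subset_rfl fun i _ => closedBall_subset_ball hk
  · exact (isClosed_iInter fun k =>
      (I k).finite_toSet.isClosed_biUnion fun i _ => isClosed_closedBall).isComplete

lemma isTightMeasureSet_of_forall_open_cover [SeparableSpace S] [MeasurableSpace S]
    {M : Set (Measure S)}
    (hM : ∀ U : ℕ → Set S, (∀ i, IsOpen (U i)) → ⋃ i, U i = univ → ∀ ε : ℝ≥0∞, 0 < ε →
      ∃ I : Finset ℕ, ∀ P ∈ M, P (⋃ i ∈ I, U i)ᶜ ≤ ε) :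
    IsTightMeasureSet M := by
  rw [isTightMeasureSet_iff_exists_isCompact_measure_compl_le]
  intro ε hε
  rcases isEmpty_or_nonempty S with hS | hS
  · exact ⟨∅, isCompact_empty, fun P _ => by simp [P.eq_zero_of_isEmpty]⟩
  obtain ⟨d, hd⟩ := exists_dense_seq S
  obtain ⟨u, -, hu_pos, hu⟩ := exists_seq_strictAnti_tendsto (0 : ℝ)
  obtain ⟨δ, hδ_pos, hδ⟩ := ENNReal.exists_pos_sum_of_countable' hε.ne' ℕ
  have hcover : ∀ k, ⋃ i, ball (d i) (u k) = univ := fun k =>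
    eq_univ_of_forall fun x => by
      obtain ⟨i, hi⟩ := hd.exists_dist_lt x (hu_pos k)
      exact mem_iUnion.2 ⟨i, hi⟩
  choose I hI using fun k => hM _ (fun i => isOpen_ball) (hcover k) (δ k) (hδ_pos k)
  refine ⟨_, isCompact_iInter_biUnion_closedBall hu d I, fun P hP => ?_⟩
  calc P (⋂ k, ⋃ i ∈ I k, closedBall (d i) (u k))ᶜ
      ≤ ∑' k, P (⋃ i ∈ I k, closedBall (d i) (u k))ᶜ := by
        rw [compl_iInter]
        exact measure_iUnion_le _
    _ ≤ ∑' k, P (⋃ i ∈ I k, ball (d i) (u k))ᶜ := by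
        gcongr
        exact ball_subset_closedBall
    _ ≤ ∑' k, δ k := ENNReal.tsum_le_tsum fun k => hI k P hP
    _ ≤ ε := hδ.le

end Tightness

lemma isTightMeasureSet_of_forall_exists_le {S : Type*} [TopologicalSpace S] [MeasurableSpace S]
    {M M' : Set (Measure S)} (hM : IsTightMeasureSet M) (hle : ∀ P ∈ M', ∃ Q ∈ M, P ≤ Q) :
    IsTightMeasureSet M' := by
  rw [isTightMeasureSet_iff_exists_isCompact_measure_compl_le] at hM ⊢
  intro ε hε
  obtain ⟨K, hK, hKM⟩ := hM ε hε
  refine ⟨K, hK, fun P hP => ?_⟩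
  obtain ⟨Q, hQ, hPQ⟩ := hle P hP
  exact (hPQ Kᶜ).trans (hKM Q hQ)

lemma exists_tendsto_ultrafilter_of_isTightMeasureSet {ι S : Type*} [TopologicalSpace S]
    [T4Space S] [MeasurableSpace S] [BorelSpace S] {P : ι → FiniteMeasure S} {C : ℝ≥0}
    (hmass : ∀ i, (P i).mass ≤ C)
    (htight : IsTightMeasureSet (range fun i => (P i : Measure S))) (F : Ultrafilter ι) :
    ∃ a, Tendsto P F (𝓝 a) := by
  obtain ⟨u, -, hu_pos, hu⟩ := exists_seq_strictAnti_tendsto (0 : ℝ≥0)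
  choose K hK hKP using fun k => isTightMeasureSet_iff_exists_isCompact_measure_compl_le.1 htight
    (u k) (ENNReal.coe_pos.2 (hu_pos k))
  have hcompact := isCompact_setOfPred_finiteMeasure_mass_le_compl_isCompact_le C hu hK
    (Or.inl inferInstance)
  obtain ⟨a, -, ha⟩ := hcompact.ultrafilter_le_nhds (F.map P) <|
    le_principal_iff.2 <| mem_map.2 <| univ_mem' fun i =>
      ⟨hmass i, fun k => ENNReal.toNNReal_mono ENNReal.coe_ne_top (hKP k _ (mem_range_self i))⟩
  exact ⟨a, ha⟩

section Limit

variable {S : Type*} [TopologicalSpace S] [MeasurableSpace S] [BorelSpace S]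

lemma isTightMeasureSet_range_totalVariation [PolishSpace S] {μ : ℕ → SignedMeasure S}
    (hμ : ∀ f : S →ᵇ ℝ, CauchySeq fun n => pairing (μ n) f) :
    IsTightMeasureSet (range fun n => (μ n).totalVariation) := by
  let := upgradeIsCompletelyMetrizable S
  refine isTightMeasureSet_of_forall_open_cover fun U hU hcover ε hε => ?_
  simpa only [forall_mem_range] using exists_finset_forall_totalVariation_compl_le hμ hU hcover hε

lemma exists_tendsto_pairing_ultrafilter [T4Space S] {ι : Type*} {μ : ι → SignedMeasure S} {C : ℝ}
    (hC : ∀ i, (μ i).totalVariation.real univ ≤ C)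
    (htight : IsTightMeasureSet (range fun i => (μ i).totalVariation)) (F : Ultrafilter ι) :
    ∃ ν : SignedMeasure S, ∀ f : S →ᵇ ℝ,
      Tendsto (fun i => pairing (μ i) f) F (𝓝 (pairing ν f)) := by
  have hlimit : ∀ P : ι → FiniteMeasure S, (∀ i, (P i : Measure S) ≤ (μ i).totalVariation) →
      ∃ a, Tendsto P F (𝓝 a) := fun P hP => by
    refine exists_tendsto_ultrafilter_of_isTightMeasureSet (C := C.toNNReal) (fun i => ?_)
      (isTightMeasureSet_of_forall_exists_le htight ?_) F
    · exact NNReal.le_toNNReal_of_coe_le <|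
        (ENNReal.toReal_mono (measure_ne_top _ _) (hP i univ)).trans (hC i)
    · exact forall_mem_range.2 fun i => ⟨_, mem_range_self i, hP i⟩
  let pos : ι → FiniteMeasure S := fun i => ⟨_, (μ i).toJordanDecomposition.posPart_finite⟩
  let neg : ι → FiniteMeasure S := fun i => ⟨_, (μ i).toJordanDecomposition.negPart_finite⟩
  obtain ⟨a, ha⟩ := hlimit pos fun i => Measure.le_add_right le_rfl
  obtain ⟨b, hb⟩ := hlimit neg fun i => Measure.le_add_left le_rfl
  rw [FiniteMeasure.tendsto_iff_forall_integral_tendsto] at ha hb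
  refine ⟨(a : Measure S).toSignedMeasure - (b : Measure S).toSignedMeasure, fun f => ?_⟩
  rw [pairing_toSignedMeasure_sub_s17 (f.integrable _) (f.integrable _)]
  exact (ha f).sub (hb f)

end Limit

/-- **`C_b(S)`-weak sequential completeness of `M(S)` on Polish spaces.** If `(μ_n)` is a
sequence of finite signed Borel measures on a Polish space such that `⟨μ_n, f⟩` converges for
every bounded continuous `f : S → ℝ`, then there is a finite signed Borel measure `μ_*` with
`⟨μ_n, f⟩ → ⟨μ_*, f⟩` for every bounded continuous `f`. -/
theorem Cb_weakly_sequentially_complete {S : Type*} [TopologicalSpace S] [PolishSpace S]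
    [MeasurableSpace S] [BorelSpace S]
    (μ : ℕ → SignedMeasure S)
    (hconv : ∀ f : S → ℝ, Continuous f → (∃ C : ℝ, ∀ x, |f x| ≤ C) →
      ∃ l : ℝ, Tendsto (fun n => pairing (μ n) f) atTop (𝓝 l)) :
    ∃ ν : SignedMeasure S, ∀ f : S → ℝ, Continuous f → (∃ C : ℝ, ∀ x, |f x| ≤ C) →
      Tendsto (fun n => pairing (μ n) f) atTop (𝓝 (pairing ν f)) := by
  have hcauchy (f : S →ᵇ ℝ) : CauchySeq fun n => pairing (μ n) f :=
    (hconv f f.continuous ⟨‖f‖, f.norm_coe_le_norm⟩).elim fun _ hl => hl.cauchySeq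
  obtain ⟨C, hC⟩ := exists_forall_totalVariation_real_univ_le fun f => (hcauchy f).norm_bddAbove
  let F : Ultrafilter ℕ := Ultrafilter.of atTop
  obtain ⟨ν, hν⟩ := exists_tendsto_pairing_ultrafilter hC
    (isTightMeasureSet_range_totalVariation hcauchy) F
  refine ⟨ν, fun f hf hfb => ?_⟩
  obtain ⟨l, hl⟩ := hconv f hf hfb
  obtain ⟨B, hB⟩ := hfb
  have hνf : Tendsto (fun n => pairing (μ n) f) F (𝓝 (pairing ν f)) :=
    hν (.ofNormedAddCommGroup f hf B hB)
  rwa [← tendsto_nhds_unique (hl.mono_left (Ultrafilter.of_le atTop)) hνf]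
end
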